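/- arXiv:math/9902059 — 4 statements merged into one kernel-verified Lean document; each statement's English description precedes it below -/
import Mathlib

section
/- Let (V, ω) be a symplectic vector space, let G be a compact subgroup of GL(V), and let ε : G → {±1} be a continuous group homomorphism such that the action of G is sesquisymplectic: ω(gv, gw) = ε(g) ω(v, w) for all g ∈ G and v, w ∈ V. Then there exists a complex structure J on V compatible with ω which is G-invariant in the sense that g ∘ J = ε(g) · (J ∘ g) for every g ∈ G. -/
/-!
Averaging an arbitrary inner product over Haar measure on `G` gives a `G`-invariant inner
product `B` (`exists_invariant_form`). Write `ω v w = B (A v) w`. Then `A` is skew and invertible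
for `B`, so `S = -A²` is symmetric and positive definite, and `J = A S^{-1/2}` is a complex
structure compatible with `ω`: this is the polar decomposition of `A`. Every `g ∈ G` satisfies
`g A = ε(g) A g`, hence commutes with `S` and, because `S^{-1/2}` can be taken to be a polynomial
in `S`, with `S^{-1/2}` too. Thus `g J = ε(g) J g`.

The proof works with `R = S^{-1/4}`, a polynomial in `S` characterised by `R⁴ S = 1`
(`exists_aeval_pow_four_mul_eq_one`). Writing `J = A R²` makes the positivity of
`ω v (J v) = B (A R v) (A R v)` immediate.
-/

/-- An inverse fourth root of a symmetric positive definite operator exists as a polynomial in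
that operator, by Lagrange interpolation of `λ ↦ λ^{-1/4}` at the eigenvalues. -/
lemma exists_aeval_pow_four_mul_eq_one {E : Type*} [NormedAddCommGroup E] [InnerProductSpace ℝ E]
    [FiniteDimensional ℝ E] (S : E →ₗ[ℝ] E) (hS : S.IsSymmetric)
    (hpos : ∀ v, v ≠ 0 → 0 < inner ℝ (S v) v) :
    ∃ p : Polynomial ℝ, (Polynomial.aeval S p) ^ 4 * S = 1 := by
  classical
  let b := hS.eigenvectorBasis rfl
  let μ : Fin (Module.finrank ℝ E) → ℝ := hS.eigenvalues rfl
  have hb : ∀ i, S (b i) = μ i • b i := fun i => hS.apply_eigenvectorBasis rfl i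
  have hμ : ∀ i, 0 < μ i := by
    intro i
    have h := hpos (b i) (b.orthonormal.ne_zero i)
    rw [hb, inner_smul_left, real_inner_self_eq_norm_sq, b.orthonormal.1 i] at h
    simpa using h
  let r : ℝ → ℝ := fun x => (√(√x))⁻¹
  let s : Finset ℝ := Finset.univ.image μ
  let p := Lagrange.interpolate s id r
  have hp : ∀ i, p.eval (μ i) = r (μ i) := fun i =>
    Lagrange.eval_interpolate_at_node (v := id) r (Function.injective_id.injOn)
      (Finset.mem_image_of_mem μ (Finset.mem_univ i))
  have hr : ∀ i, r (μ i) ^ 4 * μ i = 1 := by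
    intro i
    have h1 : (√(√(μ i))) ^ 4 = μ i := by
      rw [show (4 : ℕ) = 2 * 2 from rfl, pow_mul, Real.sq_sqrt (Real.sqrt_nonneg _),
        Real.sq_sqrt (hμ i).le]
    simp only [r]
    rw [inv_pow, h1, inv_mul_cancel₀ (hμ i).ne']
  have hq : ∀ i, Polynomial.aeval S p (b i) = r (μ i) • b i := by
    intro i
    rw [Module.End.aeval_apply_of_hasEigenvector (μ := μ i), hp]
    exact Module.End.hasEigenvector_iff.2
      ⟨Module.End.mem_eigenspace_iff.2 (hb i), b.orthonormal.ne_zero i⟩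
  refine ⟨p, b.toBasis.ext fun i => ?_⟩
  simp only [OrthonormalBasis.coe_toBasis, Module.End.mul_apply, Module.End.one_apply, hb,
    pow_succ, pow_zero, one_mul, map_smul, hq, smul_smul]
  rw [show μ i * (r (μ i) * (r (μ i) * (r (μ i) * r (μ i)))) = 1 by rw [← hr i]; ring, one_smul]

/-- Polar decomposition of a symplectic form against an inner product `B`. The resulting complex
structure depends only on `B` and `ω`, so a surjective `B`-isometry that scales `ω` by a sign
commutes with it up to the same sign. -/
lemma exists_complexStructure {V : Type*} [AddCommGroup V] [Module ℝ V] [FiniteDimensional ℝ V]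
    (B ω : V →ₗ[ℝ] V →ₗ[ℝ] ℝ) (hsymm : ∀ v w, B v w = B w v) (hB : ∀ v, v ≠ 0 → 0 < B v v)
    (halt : ∀ v, ω v v = 0) (hnd : ∀ v, (∀ w, ω v w = 0) → v = 0) :
    ∃ J : V →ₗ[ℝ] V, (∀ v, J (J v) = - v) ∧
      (∀ v w, ω (J v) (J w) = ω v w) ∧
      (∀ v, v ≠ 0 → 0 < ω v (J v)) ∧
      (∀ (g : V →ₗ[ℝ] V) (e : ℝ), (e = 1 ∨ e = -1) → Function.Surjective g →
        (∀ v w, B (g v) (g w) = B v w) → (∀ v w, ω (g v) (g w) = e * ω v w) →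
        ∀ v, g (J v) = e • J (g v)) := by
  let core : InnerProductSpace.Core ℝ V :=
    { inner := fun v w => B v w
      conj_inner_symm := fun v w => by simpa using hsymm w v
      re_inner_nonneg := fun v => by
        rcases eq_or_ne v 0 with rfl | h
        · simp
        · simpa using (hB v h).le
      add_left := fun u v w => by simp
      smul_left := fun u v c => by simp
      definite := fun v h => by
        by_contra hv
        exact (hB v hv).ne' h }
  let _ : NormedAddCommGroup V := core.toNormedAddCommGroup
  let _ : InnerProductSpace ℝ V := InnerProductSpace.ofCore core.toCore
  have hin : ∀ v w : V, inner ℝ v w = B v w := fun _ _ => rfl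
  have hωsk : ∀ v w, ω v w = - ω w v := by
    intro v w
    have h := halt (v + w)
    simp only [map_add, LinearMap.add_apply, halt] at h
    linarith
  have hBinj : ∀ v w, (∀ u, B v u = B w u) → v = w := by
    intro v w h
    by_contra hne
    have := hB (v - w) (sub_ne_zero.2 hne)
    rw [LinearMap.map_sub₂, h, sub_self] at this
    exact this.ne rfl
  have hker : Function.Injective B := fun v w h => hBinj v w fun u => by rw [h]
  obtain ⟨A, hA⟩ : ∃ A : V →ₗ[ℝ] V, ∀ v w, B (A v) w = ω v w := by
    let Be := LinearEquiv.ofInjectiveOfFinrankEq B hker (Subspace.dual_finrank_eq).symm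
    refine ⟨Be.symm.toLinearMap ∘ₗ ω, fun v w => ?_⟩
    have : B (Be.symm (ω v)) = ω v := Be.apply_symm_apply (ω v)
    simp [this]
  have hAsk : ∀ v w, B (A v) w = - B v (A w) := by
    intro v w
    rw [hA, hsymm v, hA, hωsk]
  have hAinj : ∀ v, A v = 0 → v = 0 := fun v h => hnd v fun w => by rw [← hA, h]; simp
  let S : V →ₗ[ℝ] V := -(A * A)
  have hSB : ∀ v w, B (S v) w = B (A v) (A w) := by
    intro v w
    simp only [S, LinearMap.neg_apply, Module.End.mul_apply, map_neg]
    rw [hAsk (A v), neg_neg]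
  have hS : S.IsSymmetric := by
    intro v w
    rw [hin, hin, hSB, hsymm v, hSB, hsymm]
  obtain ⟨p, hp⟩ := exists_aeval_pow_four_mul_eq_one S hS fun v hv => by
    rw [hin, hSB]
    exact hB _ fun h => hv (hAinj v h)
  set R : V →ₗ[ℝ] V := Polynomial.aeval S p with hR
  have hRcomm : ∀ T : Module.End ℝ V, Commute T S → ∀ v, T (R v) = R (T v) := by
    intro T hT v
    have h : Commute T R := by
      rw [hR, Polynomial.aeval_eq_sum_range]
      exact Commute.sum_right _ _ _ fun n _ => (hT.pow_right n).smul_right _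
    exact LinearMap.congr_fun h.eq v
  have hRsymm : ∀ v w, B (R v) w = B v (R w) := by
    have hn : ∀ (n : ℕ) v w, B ((S ^ n) v) w = B v ((S ^ n) w) := by
      intro n
      induction n with
      | zero => simp
      | succ n ih =>
        intro v w
        rw [pow_succ, Module.End.mul_apply, ih, ← pow_succ, pow_succ', Module.End.mul_apply]
        exact hS v _
    intro v w
    simp [hR, Polynomial.aeval_eq_sum_range, LinearMap.sum_apply, hn]
  have hR4 : ∀ v, R (R (R (R (S v)))) = v := fun v => by
    simpa [pow_succ] using LinearMap.congr_fun hp v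
  have hRA : ∀ v, A (R v) = R (A v) :=
    hRcomm A (by simp only [S]; exact ((Commute.refl A).mul_right (Commute.refl A)).neg_right)
  have hRS : ∀ v, S (R v) = R (S v) := hRcomm S (Commute.refl S)
  have hRinj : ∀ v, R v = 0 → v = 0 := fun v h => by
    rw [← hR4 v, ← hRS, h]; simp
  have hJJ : ∀ v, A (R (R (A (R (R v))))) = -v := fun v => by
    have h : A (A v) = - S v := by simp [S]
    simp only [hRA, h]
    simp [hR4]
  have hJsk : ∀ v w, B (A (R (R v))) w = - B v (A (R (R w))) := fun v w => by
    rw [hAsk, hRsymm, hRsymm, hRA, hRA]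
  refine ⟨A * R * R, hJJ, fun v w => ?_, fun v hv => ?_, fun g e he hg hgB hgω => ?_⟩
  · simp only [Module.End.mul_apply]
    have hAJ : A (A (R (R v))) = A (R (R (A v))) := by simp only [hRA]
    rw [← hA, hAJ, hJsk, hJJ, map_neg, neg_neg, hA]
  · simp only [Module.End.mul_apply]
    rw [← hA, hRA, ← hRsymm, ← hRA]
    exact hB _ fun h => hv (hRinj v (hAinj _ h))
  · have hee : e * e = 1 := by rcases he with rfl | rfl <;> norm_num
    have hgA : ∀ v, g (A v) = e • A (g v) := fun v => hBinj _ _ fun u => by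
      obtain ⟨w, rfl⟩ := hg u
      rw [hgB, hA, map_smul, LinearMap.smul_apply, hA, hgω, smul_eq_mul, ← mul_assoc, hee, one_mul]
    have hgR : ∀ v, g (R v) = R (g v) := hRcomm g <| LinearMap.ext fun v => by
      simp [S, hgA, smul_smul, hee]
    intro v
    simp [hgA, hgR]

/-- Unitarian trick: the average over Haar measure of the translates of a coordinate inner product
is an inner product invariant under the compact group. -/
lemma exists_invariant_form {V : Type*} [NormedAddCommGroup V] [NormedSpace ℝ V]
    [FiniteDimensional ℝ V] (G : Subgroup (V →L[ℝ] V)ˣ)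
    (hG : IsCompact (G : Set (V →L[ℝ] V)ˣ)) :
    ∃ B : V →ₗ[ℝ] V →ₗ[ℝ] ℝ, (∀ v w, B v w = B w v) ∧ (∀ v, v ≠ 0 → 0 < B v v) ∧
      ∀ (g : G) (v w : V), B (((g : (V →L[ℝ] V)ˣ) : V →L[ℝ] V) v)
        (((g : (V →L[ℝ] V)ˣ) : V →L[ℝ] V) w) = B v w := by
  have : CompactSpace G := isCompact_iff_compactSpace.1 hG
  let _ : MeasurableSpace G := borel G
  have : BorelSpace G := ⟨rfl⟩
  let μ : MeasureTheory.Measure G := MeasureTheory.Measure.haar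
  let b := Module.finBasis ℝ V
  -- Acting through inverses turns the left invariance of `μ` into invariance of the average.
  let ρ : G → V →L[ℝ] V := fun g => ((g⁻¹ : G) : (V →L[ℝ] V)ˣ)
  have hρ : ∀ v, Continuous fun g => ρ g v := fun v => by
    have h : Continuous ρ :=
      Units.continuous_val.comp (continuous_subtype_val.comp continuous_inv)
    exact h.clm_apply continuous_const
  have hρmul : ∀ (g h : G) (v : V),
      ρ g (((h : (V →L[ℝ] V)ˣ) : V →L[ℝ] V) v) = ρ (h⁻¹ * g) v := fun g h v => by
    simp [ρ]
  let F : V → V → G → ℝ := fun v w g => ∑ i, b.coord i (ρ g v) * b.coord i (ρ g w)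
  have hF : ∀ v w, Continuous (F v w) := fun v w =>
    continuous_finsetSum _ fun i _ =>
      ((LinearMap.continuous_of_finiteDimensional (b.coord i)).comp (hρ v)).mul
        ((LinearMap.continuous_of_finiteDimensional (b.coord i)).comp (hρ w))
  have hcs : ∀ f : G → ℝ, HasCompactSupport f := fun f => HasCompactSupport.of_compactSpace f
  have hFi : ∀ v w, MeasureTheory.Integrable (F v w) μ := fun v w =>
    (hF v w).integrable_of_hasCompactSupport (hcs _)
  have hsymm : ∀ v w, F v w = F w v := fun v w => by
    funext g
    exact Finset.sum_congr rfl fun i _ => mul_comm _ _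
  have hadd : ∀ u v w, F (u + v) w = F u w + F v w := fun u v w => by
    funext g
    simp [F, add_mul, Finset.sum_add_distrib]
  have hsmul : ∀ (c : ℝ) v w, F (c • v) w = c • F v w := fun c v w => by
    funext g
    simp [F, mul_assoc, Finset.mul_sum]
  have hIadd : ∀ u v w, ∫ g, F (u + v) w g ∂μ = ∫ g, F u w g ∂μ + ∫ g, F v w g ∂μ :=
    fun u v w => by
      rw [hadd]
      exact MeasureTheory.integral_add (hFi u w) (hFi v w)
  have hIsmul : ∀ (c : ℝ) v w, ∫ g, F (c • v) w g ∂μ = c • ∫ g, F v w g ∂μ :=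
    fun c v w => by
      rw [hsmul]
      exact MeasureTheory.integral_smul c _
  refine ⟨LinearMap.mk₂ ℝ (fun v w => ∫ g, F v w g ∂μ) hIadd hIsmul
    (fun u v w => by simp only [hsymm u, hIadd]) (fun c v w => by simp only [hsymm v, hIsmul]),
    fun v w => ?_, fun v hv => ?_, fun h v w => ?_⟩
  · simp only [LinearMap.mk₂_apply, hsymm v]
  · rw [LinearMap.mk₂_apply]
    refine (hF v v).integral_pos_of_hasCompactSupport_nonneg_nonzero (x := 1) (hcs _)
      (fun g => Finset.sum_nonneg fun i _ => mul_self_nonneg _) fun h0 => hv ?_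
    have hz := (Finset.sum_eq_zero_iff_of_nonneg fun i _ => mul_self_nonneg _).1 h0
    refine b.ext_elem fun i => ?_
    simpa [ρ] using hz i (Finset.mem_univ i)
  · rw [LinearMap.mk₂_apply, LinearMap.mk₂_apply]
    have : ∀ g, F (((h : (V →L[ℝ] V)ˣ) : V →L[ℝ] V) v) (((h : (V →L[ℝ] V)ˣ) : V →L[ℝ] V) w) g
        = F v w (h⁻¹ * g) := fun g => by simp only [F, hρmul]
    simp only [this]
    exact MeasureTheory.integral_mul_left_eq_self (F v w) h⁻¹

/-- If a compact subgroup `G` of `GL(V)` acts sesquisymplectically on the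
symplectic vector space `(V, ω)` relative to a continuous character `ε : G → {±1}`, then there
exists an `ω`-compatible complex structure `J` on `V` with `g ∘ J = ε(g) · (J ∘ g)` for all
`g ∈ G`. -/
theorem stmt3 {V : Type*} [NormedAddCommGroup V] [NormedSpace ℝ V] [FiniteDimensional ℝ V]
    (ω : V →ₗ[ℝ] V →ₗ[ℝ] ℝ)
    (halt : ∀ v, ω v v = 0)
    (hnd : ∀ v, (∀ w, ω v w = 0) → v = 0)
    (G : Subgroup (V →L[ℝ] V)ˣ)
    (hG : IsCompact (G : Set (V →L[ℝ] V)ˣ))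
    (ε : G → ℝ) (hεcont : Continuous ε)
    (hεmul : ∀ g h : G, ε (g * h) = ε g * ε h)
    (hεval : ∀ g : G, ε g = 1 ∨ ε g = -1)
    (hsesq : ∀ (g : G) (v w : V),
      ω (((g : (V →L[ℝ] V)ˣ) : V →L[ℝ] V) v) (((g : (V →L[ℝ] V)ˣ) : V →L[ℝ] V) w)
        = ε g * ω v w) :
    ∃ J : V →ₗ[ℝ] V, (∀ v, J (J v) = - v) ∧
      (∀ v w, ω (J v) (J w) = ω v w) ∧
      (∀ v, v ≠ 0 → 0 < ω v (J v)) ∧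
      (∀ (g : G) (v : V),
        ((g : (V →L[ℝ] V)ˣ) : V →L[ℝ] V) (J v)
          = ε g • J (((g : (V →L[ℝ] V)ˣ) : V →L[ℝ] V) v)) := by
  obtain ⟨B, hsymm, hB, hinv⟩ := exists_invariant_form G hG
  obtain ⟨J, h1, h2, h3, h4⟩ := exists_complexStructure B ω hsymm hB halt hnd
  refine ⟨J, h1, h2, h3, fun g v => ?_⟩
  refine h4 ((g : (V →L[ℝ] V)ˣ) : V →L[ℝ] V).toLinearMap (ε g) (hεval g) (fun w => ?_)
    (hinv g) (hsesq g) v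
  exact ⟨(((g : (V →L[ℝ] V)ˣ)⁻¹ : (V →L[ℝ] V)ˣ) : V →L[ℝ] V) w, by
    simp [← mul_apply_eq_comp]⟩
end

section
/- Let (V, ω) be a symplectic vector space. For a positive-definite inner product β on V let A_β be the unique linear endomorphism of V with ω(v, w) = β(A_β v, w) for all v, w; A_β is β-skew-adjoint and invertible, −A_β² is β-self-adjoint and positive-definite, and, with P the unique β-positive-definite square root of −A_β², the endomorphism π(β) := P⁻¹ ∘ A_β is a complex structure compatible with ω. Moreover π is a left inverse of the map ι sending a compatible complex structure J to the inner product ι(J) = ω(·, J·), i.e. π(ι(J)) = J for every compatible J; and both maps are equivariant: for any linear automorphism g of V with ω(gv, gw) = ε ω(v, w) for a sign ε ∈ {±1}, one has ι(ε · gJg⁻¹) = ι(J)(g⁻¹·, g⁻¹·) for every compatible J, and π(β(g⁻¹·, g⁻¹·)) = ε · g π(β) g⁻¹ for every inner product β. -/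
/-!
Everything rests on uniqueness of the positive-definite square root. If `P² = Q²` with both
`P`, `Q` self-adjoint and positive, then `D = P - Q` satisfies `P D + D Q = 0`; pairing this with
an eigenvector `D v = μ v` gives `μ (β(Pv,v) + β(Qv,v)) = 0`, so every eigenvalue of the
self-adjoint map `D` vanishes and `D = 0` by the spectral theorem (`posSqrt_unique`).

That `P` commutes with `A` follows from the same uniqueness: since `A² = -P²` commutes with `P`,
the conjugate `A⁻¹ P A` is again a self-adjoint positive square root of `-A²`
(`posSqrt_comm`). Hence `J = P⁻¹ A` satisfies `J² = P⁻² A² = -1`, it preserves `ω`, and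
`ω(v, Jv) = β(Av, P⁻¹Av) > 0`. When `β = ω(·, J₀·)` one finds `A = J₀`, so `P = 1` by uniqueness;
and equivariance of `π` holds because `g⁻¹ A' g = ε A` and `g⁻¹ P' g` is a positive square root
of `-A²`, hence equal to `P`.
-/

/-- A `β`-self-adjoint endomorphism all of whose eigenvalues vanish is zero: the spectral theorem
for the Euclidean structure defined by `β`. -/
lemma selfAdjoint_eq_zero {V : Type*} [AddCommGroup V] [Module ℝ V] [FiniteDimensional ℝ V]
    (β : V →ₗ[ℝ] V →ₗ[ℝ] ℝ) (hβsymm : ∀ v w, β v w = β w v)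
    (hβpos : ∀ v, v ≠ 0 → 0 < β v v) (D : V →ₗ[ℝ] V)
    (hD : ∀ v w, β (D v) w = β v (D w))
    (hev : ∀ (v : V) (μ : ℝ), v ≠ 0 → D v = μ • v → μ = 0) : D = 0 := by
  let core : InnerProductSpace.Core ℝ V :=
    { inner := fun v w => β v w
      conj_inner_symm := fun v w => by simpa using hβsymm w v
      re_inner_nonneg := fun v => by
        by_cases h : v = 0
        · simp [h]
        · simpa using (hβpos v h).le
      add_left := fun u v w => by simp
      smul_left := fun u v r => by simp
      definite := fun v hv => by
        by_contra h
        exact (hβpos v h).ne' hv }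
  let _ : NormedAddCommGroup V := core.toNormedAddCommGroup
  let _ : InnerProductSpace ℝ V := InnerProductSpace.ofCore core.toCore
  have hs : D.IsSymmetric := hD
  let b := hs.eigenvectorBasis rfl
  refine b.toBasis.ext fun i => ?_
  have h1 : D (b i) = hs.eigenvalues rfl i • b i := hs.apply_eigenvectorBasis rfl i
  have h0 : b i ≠ 0 := by simpa using b.toBasis.ne_zero i
  simp [h1, hev _ _ h0 h1]

lemma posSqrt_unique {V : Type*} [AddCommGroup V] [Module ℝ V] [FiniteDimensional ℝ V]
    (β : V →ₗ[ℝ] V →ₗ[ℝ] ℝ) (hβsymm : ∀ v w, β v w = β w v)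
    (hβpos : ∀ v, v ≠ 0 → 0 < β v v) (P Q : V →ₗ[ℝ] V)
    (hP : ∀ v w, β (P v) w = β v (P w)) (hPpos : ∀ v, v ≠ 0 → 0 < β (P v) v)
    (hQ : ∀ v w, β (Q v) w = β v (Q w)) (hQpos : ∀ v, v ≠ 0 → 0 < β (Q v) v)
    (hPQ : ∀ v, P (P v) = Q (Q v)) : P = Q := by
  refine sub_eq_zero.mp (selfAdjoint_eq_zero β hβsymm hβpos (P - Q) ?_ ?_)
  · intro v w
    simp [hP, hQ]
  · intro v μ hv h
    have hD : P v - Q v = μ • v := h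
    -- `P D + D Q = 0`, paired with the eigenvector `v`
    have key : β (P (P v - Q v)) v + β (P (Q v) - Q (Q v)) v = 0 := by
      simp [hPQ]
    have h2 : β (P (Q v) - Q (Q v)) v = β (Q v) (P v - Q v) := by
      simp [hP, hQ]
    rw [h2, hD] at key
    simp only [map_smul, LinearMap.smul_apply, smul_eq_mul] at key
    have h3 : μ * (β (P v) v + β (Q v) v) = 0 := by linarith
    exact (mul_eq_zero.mp h3).resolve_right (add_pos (hPpos v hv) (hQpos v hv)).ne'

/-- A positive square root `P` of `-A²`, for `A` skew-adjoint and invertible, commutes with `A`,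
since `A⁻¹ P A` is another such square root. -/
lemma posSqrt_comm {V : Type*} [AddCommGroup V] [Module ℝ V] [FiniteDimensional ℝ V]
    (β : V →ₗ[ℝ] V →ₗ[ℝ] ℝ) (hβsymm : ∀ v w, β v w = β w v)
    (hβpos : ∀ v, v ≠ 0 → 0 < β v v) (A P : V →ₗ[ℝ] V)
    (hskew : ∀ v w, β (A v) w = - β v (A w)) (hbij : Function.Bijective A)
    (hP : ∀ v w, β (P v) w = β v (P w)) (hPpos : ∀ v, v ≠ 0 → 0 < β (P v) v)
    (hPsq : ∀ v, P (P v) = - A (A v)) (v : V) : P (A v) = A (P v) := by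
  let e : V ≃ₗ[ℝ] V := LinearEquiv.ofBijective A hbij
  have he : ∀ v, A (e.symm v) = v := fun v => e.apply_symm_apply v
  have he' : ∀ v, e.symm (A v) = v := fun v => e.symm_apply_apply v
  have hAAP : ∀ v, A (A (P v)) = P (A (A v)) := fun v => by
    have h1 := hPsq (P v)
    rw [hPsq v, map_neg] at h1
    exact (neg_injective h1).symm
  have hinv : ∀ v w, β (e.symm v) w = - β v (e.symm w) := fun v w => by
    have h := hskew (e.symm v) (e.symm w)
    rw [he, he] at h
    linarith
  -- `A⁻¹ P A = A P A⁻¹`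
  have hconj : ∀ v, e.symm (P (A v)) = A (P (e.symm v)) := fun v => by
    apply hbij.1
    rw [he, hAAP, he]
  have hQ : (e.symm : V →ₗ[ℝ] V) ∘ₗ P ∘ₗ A = P := by
    refine posSqrt_unique β hβsymm hβpos _ P ?_ ?_ hP hPpos ?_
    · intro v w
      simp only [LinearMap.comp_apply, LinearEquiv.coe_coe]
      rw [hinv, hP, hskew, neg_neg, hconj w]
    · intro v hv
      simp only [LinearMap.comp_apply, LinearEquiv.coe_coe]
      -- with `v = A x`, the pairing is `β(APx, Ax) = β(Px, P²x)`
      obtain ⟨x, rfl⟩ := hbij.2 v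
      have hx : x ≠ 0 := by
        rintro rfl
        exact hv (map_zero A)
      have hPx : P x ≠ 0 := fun h => by
        have h' := hPpos x hx
        simp [h] at h'
      rw [hconj, he', hskew, ← map_neg, ← hPsq, hβsymm]
      exact hPpos _ hPx
    · intro v
      simp only [LinearMap.comp_apply, LinearEquiv.coe_coe]
      rw [he, hPsq (A v), hPsq, map_neg, he']
  have h := congrArg A (LinearMap.congr_fun hQ v)
  simpa [he] using h

/-- Construction of a compatible complex structure from an inner product:
for an inner product `β` on the symplectic vector space `(V, ω)`, the endomorphism `A = A_β`
defined by `ω(v,w) = β(Av, w)` (which is unique) is `β`-skew-adjoint and invertible, `−A²` is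
`β`-self-adjoint and positive definite, and for the unique `β`-self-adjoint positive-definite
square root `P` of `−A²`, the endomorphism `π(β) = P⁻¹ ∘ A` is a complex structure compatible
with `ω`.  Moreover `π` is a left inverse of `ι : J ↦ ω(·, J·)`, and both maps are equivariant
for sesquisymplectic automorphisms. -/
theorem stmt4 {V : Type*} [AddCommGroup V] [Module ℝ V] [FiniteDimensional ℝ V]
    (ω : V →ₗ[ℝ] V →ₗ[ℝ] ℝ)
    (hωalt : ∀ v, ω v v = 0)
    (hωnd : ∀ v, (∀ w, ω v w = 0) → v = 0)
    (β : V →ₗ[ℝ] V →ₗ[ℝ] ℝ)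
    (hβsymm : ∀ v w, β v w = β w v)
    (hβpos : ∀ v, v ≠ 0 → 0 < β v v)
    (A : V →ₗ[ℝ] V) (hA : ∀ v w, ω v w = β (A v) w)
    (P : V →ₗ[ℝ] V)
    (hPsa : ∀ v w, β (P v) w = β v (P w))
    (hPpos : ∀ v, v ≠ 0 → 0 < β (P v) v)
    (hPsq : ∀ v, P (P v) = - A (A v))
    (Pinv : V →ₗ[ℝ] V)
    (hPinv₁ : ∀ v, Pinv (P v) = v) (hPinv₂ : ∀ v, P (Pinv v) = v) :
    -- `A_β` is the unique endomorphism with `ω(v,w) = β(Av,w)`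
    (∀ A' : V →ₗ[ℝ] V, (∀ v w, ω v w = β (A' v) w) → A' = A) ∧
    -- `A_β` is `β`-skew-adjoint and invertible
    (∀ v w, β (A v) w = - β v (A w)) ∧
    Function.Bijective A ∧
    -- `−A_β²` is `β`-self-adjoint and positive-definite
    (∀ v w, β (A (A v)) w = β v (A (A w))) ∧
    (∀ v, v ≠ 0 → 0 < - β (A (A v)) v) ∧
    -- `P` is the unique `β`-self-adjoint positive-definite square root of `−A_β²`
    (∀ P' : V →ₗ[ℝ] V,
      (∀ v w, β (P' v) w = β v (P' w)) → (∀ v, v ≠ 0 → 0 < β (P' v) v) →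
      (∀ v, P' (P' v) = - A (A v)) → P' = P) ∧
    -- `π(β) = P⁻¹ ∘ A_β` is a complex structure compatible with `ω`
    (∀ v, Pinv (A (Pinv (A v))) = - v) ∧
    (∀ v w, ω (Pinv (A v)) (Pinv (A w)) = ω v w) ∧
    (∀ v, v ≠ 0 → 0 < ω v (Pinv (A v))) ∧
    -- `π` is a left inverse of `ι`: if `β = ι(J₀) = ω(·, J₀·)` for a compatible `J₀`,
    -- then `π(β) = J₀`
    (∀ J₀ : V →ₗ[ℝ] V,
      (∀ v, J₀ (J₀ v) = - v) → (∀ v w, ω (J₀ v) (J₀ w) = ω v w) →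
      (∀ v, v ≠ 0 → 0 < ω v (J₀ v)) → (∀ v w, β v w = ω v (J₀ w)) →
      Pinv ∘ₗ A = J₀) ∧
    -- equivariance of `ι`: `ι(ε · g J₀ g⁻¹) = ι(J₀)(g⁻¹·, g⁻¹·)`
    (∀ (g : V ≃ₗ[ℝ] V) (ε : ℝ), (ε = 1 ∨ ε = -1) →
      (∀ v w, ω (g v) (g w) = ε * ω v w) →
      ∀ J₀ : V →ₗ[ℝ] V,
        (∀ v, J₀ (J₀ v) = - v) → (∀ v w, ω (J₀ v) (J₀ w) = ω v w) →
        (∀ v, v ≠ 0 → 0 < ω v (J₀ v)) →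
        ∀ v w, ω v (ε • g (J₀ (g.symm w))) = ω (g.symm v) (J₀ (g.symm w))) ∧
    -- equivariance of `π`: `π(β(g⁻¹·, g⁻¹·)) = ε · g ∘ π(β) ∘ g⁻¹`
    (∀ (g : V ≃ₗ[ℝ] V) (ε : ℝ), (ε = 1 ∨ ε = -1) →
      (∀ v w, ω (g v) (g w) = ε * ω v w) →
      ∀ A' P' Pinv' : V →ₗ[ℝ] V,
        (∀ v w, ω v w = β (g.symm (A' v)) (g.symm w)) →
        (∀ v w, β (g.symm (P' v)) (g.symm w) = β (g.symm v) (g.symm (P' w))) →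
        (∀ v, v ≠ 0 → 0 < β (g.symm (P' v)) (g.symm v)) →
        (∀ v, P' (P' v) = - A' (A' v)) →
        (∀ v, Pinv' (P' v) = v) → (∀ v, P' (Pinv' v) = v) →
        ∀ v, Pinv' (A' v) = ε • g (Pinv (A (g.symm v)))) := by
  have hzero : ∀ v, (∀ w, β v w = 0) → v = 0 := fun v h => by
    by_contra hv
    exact (hβpos v hv).ne' (h v)
  have hext : ∀ u v, (∀ w, β u w = β v w) → u = v := fun u v h =>
    sub_eq_zero.mp (hzero _ fun w => by simp [h w])
  have hωskew : ∀ v w, ω v w = - ω w v := fun v w => by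
    have h := hωalt (v + w)
    simp only [map_add, LinearMap.add_apply, hωalt] at h
    linarith
  have hskew : ∀ v w, β (A v) w = - β v (A w) := fun v w => by
    rw [← hA, hωskew, hA, hβsymm]
  have hinj : Function.Injective A := by
    rw [injective_iff_map_eq_zero]
    exact fun v hv => hωnd v fun w => by simp [hA, hv]
  have hbij : Function.Bijective A := ⟨hinj, LinearMap.injective_iff_surjective.mp hinj⟩
  have hA0 : ∀ v, v ≠ 0 → A v ≠ 0 := fun v hv h => hv (hinj (by rw [h, map_zero]))
  have huniq : ∀ P' : V →ₗ[ℝ] V,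
      (∀ v w, β (P' v) w = β v (P' w)) → (∀ v, v ≠ 0 → 0 < β (P' v) v) →
      (∀ v, P' (P' v) = - A (A v)) → P' = P := fun P' h1 h2 h3 =>
    posSqrt_unique β hβsymm hβpos P' P h1 h2 hPsa hPpos fun v => by rw [h3, hPsq]
  have hcomm := posSqrt_comm β hβsymm hβpos A P hskew hbij hPsa hPpos hPsq
  have hcomm' : ∀ v, Pinv (A v) = A (Pinv v) := fun v => by
    rw [← hPinv₁ (A (Pinv v)), hcomm, hPinv₂]
  have hPinvsa : ∀ v w, β (Pinv v) w = β v (Pinv w) := fun v w => by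
    have h := hPsa (Pinv v) (Pinv w)
    rw [hPinv₂, hPinv₂] at h
    exact h.symm
  have hJsq : ∀ v, Pinv (A (Pinv (A v))) = - v := fun v => by
    rw [hcomm' v, ← neg_neg (A (A (Pinv v))), ← hPsq, map_neg, hPinv₁, hPinv₂]
  refine ⟨?_, hskew, hbij, ?_, ?_, huniq, hJsq, ?_, ?_, ?_, ?_, ?_⟩
  · intro A' h
    ext v
    exact hext _ _ fun w => by rw [← h, hA]
  · intro v w
    rw [hskew, hskew, neg_neg]
  · intro v hv
    rw [hskew, neg_neg]
    exact hβpos _ (hA0 v hv)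
  · intro v w
    rw [hA, ← hPinvsa, hJsq, map_neg, LinearMap.neg_apply, ← hskew, ← hA]
  · intro v hv
    have h0 : Pinv (A v) ≠ 0 := fun h => hA0 v hv (by rw [← hPinv₂ (A v), h, map_zero])
    have h := hPpos _ h0
    rwa [hPinv₂, ← hA] at h
  · intro J₀ h1 h2 _ h4
    have hAJ : A = J₀ := by
      ext v
      refine sub_eq_zero.mp (hzero _ fun w => ?_)
      rw [map_sub, LinearMap.sub_apply, ← hA, h4, h2, sub_self]
    have hPid : LinearMap.id = P := huniq _ (fun _ _ => rfl) hβpos fun v => by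
      simp [hAJ, h1]
    ext v
    have h := hPinv₁ (A v)
    rw [← hPid] at h
    simpa [hAJ] using h
  · intro g ε hε hg J₀ _ _ _ v w
    have h := hg (g.symm v) (J₀ (g.symm w))
    rw [g.apply_symm_apply] at h
    rw [map_smul, h, smul_eq_mul]
    rcases hε with rfl | rfl <;> ring
  · intro g ε hε hg A' P' Pinv' hA' hP'sa hP'pos hP'sq h1 h2 v
    have hεε : ε * ε = 1 := by rcases hε with rfl | rfl <;> norm_num
    have hgA : ∀ v, g.symm (A' v) = ε • A (g.symm v) := fun v => by
      refine hext _ _ fun w => ?_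
      have h := hg (g.symm v) w
      have h' := hA' v (g w)
      rw [g.symm_apply_apply] at h'
      rw [g.apply_symm_apply] at h
      rw [← h', h, hA, map_smul, LinearMap.smul_apply, smul_eq_mul]
    have hPeq : (g.symm : V →ₗ[ℝ] V) ∘ₗ P' ∘ₗ (g : V →ₗ[ℝ] V) = P := by
      refine huniq _ ?_ ?_ ?_
      · intro v w
        simpa using hP'sa (g v) (g w)
      · intro v hv
        simpa using hP'pos (g v) (by simpa using hv)
      · intro v
        simp [hP'sq, hgA, smul_smul, hεε]
    have hgP : ∀ v, P' (g v) = g (P v) := fun v => by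
      rw [← LinearMap.congr_fun hPeq v]
      simp
    have hA'g : A' v = g (ε • A (g.symm v)) := by rw [← hgA, g.apply_symm_apply]
    have h3 : A' v = P' (ε • g (Pinv (A (g.symm v)))) := by
      rw [map_smul, hgP, hPinv₂, hA'g, map_smul]
    rw [h3, h1]
end

section
/- Let V be a finite-dimensional real vector space, let σ : V → V be a linear involution, and let S ⊆ V be a finite set such that for every α ∈ S either σ(α) = α or −σ(α) ∈ S. Then the convex cone generated by {α − σ(α) : α ∈ S} (the set of finite nonnegative linear combinations of these vectors) is equal to the intersection of the convex cone generated by S with the (−1)-eigenspace {v ∈ V : σ(v) = −v}. -/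
/-!
If `σ v = -v`, then `v = (v - σ v) / 2`, so applying `(1 - σ) / 2` to a nonnegative combination of
elements of `S` equal to `v` writes `v` as a nonnegative combination of the vectors `α - σ α`.
Conversely each `α - σ α` is anti-invariant because `σ` is an involution, and lies in the cone of
`S`: it is either `0` or the sum of the two elements `α` and `-σ α` of `S`.
-/

/-- The convex cone generated by a subset `T` of a real vector space: all finite nonnegative
linear combinations of elements of `T` (including `0`, the empty combination). -/
def coneGen {V : Type*} [AddCommGroup V] [Module ℝ V] (T : Set V) : Set V :=
  {v | ∃ (n : ℕ) (c : Fin n → ℝ) (x : Fin n → V),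
    (∀ i, 0 ≤ c i) ∧ (∀ i, x i ∈ T) ∧ v = ∑ i, c i • x i}

theorem coneGen_add {V : Type*} [AddCommGroup V] [Module ℝ V] {T : Set V} {v w : V}
    (hv : v ∈ coneGen T) (hw : w ∈ coneGen T) : v + w ∈ coneGen T := by
  obtain ⟨n, c, x, hc, hx, rfl⟩ := hv
  obtain ⟨m, d, y, hd, hy, rfl⟩ := hw
  refine ⟨n + m, Fin.append c d, Fin.append x y, ?_, ?_, ?_⟩
  · intro i
    refine Fin.addCases (fun j => ?_) (fun j => ?_) i <;> simp [hc, hd]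
  · intro i
    refine Fin.addCases (fun j => ?_) (fun j => ?_) i <;> simp [hx, hy]
  · simp [Fin.sum_univ_add]

theorem coneGen_zero {V : Type*} [AddCommGroup V] [Module ℝ V] (T : Set V) :
    (0 : V) ∈ coneGen T :=
  ⟨0, Fin.elim0, Fin.elim0, fun i => i.elim0, fun i => i.elim0, by simp⟩

theorem coneGen_smul_of_mem {V : Type*} [AddCommGroup V] [Module ℝ V] {T : Set V} {v : V}
    (hv : v ∈ T) {c : ℝ} (hc : 0 ≤ c) : c • v ∈ coneGen T :=
  ⟨1, fun _ => c, fun _ => v, fun _ => hc, fun _ => hv, by simp⟩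

/-- Let `σ` be a linear involution of a finite-dimensional real vector space
`V` and `S ⊆ V` a finite set such that every `α ∈ S` satisfies `σ α = α` or `−σ α ∈ S`.  Then
the convex cone generated by `{α − σ α : α ∈ S}` equals the intersection of the convex cone
generated by `S` with the `(−1)`-eigenspace of `σ`. -/
theorem stmt8 {V : Type*} [AddCommGroup V] [Module ℝ V] [FiniteDimensional ℝ V]
    (σ : V →ₗ[ℝ] V) (hσ : ∀ v, σ (σ v) = v)
    (S : Set V) (hS : S.Finite)
    (hclosed : ∀ α ∈ S, σ α = α ∨ -σ α ∈ S) :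
    coneGen {w | ∃ α ∈ S, w = α - σ α} = coneGen S ∩ {v | σ v = -v} := by
  ext v
  constructor
  · rintro ⟨n, c, x, hc, hx, rfl⟩
    choose a haS hxa using hx
    constructor
    · refine Finset.sum_induction _ (· ∈ coneGen S) (fun _ _ => coneGen_add) (coneGen_zero S) ?_
      intro i _
      rw [hxa i]
      rcases hclosed (a i) (haS i) with h | h
      · simpa [h] using coneGen_zero S
      · rw [sub_eq_add_neg, smul_add]
        exact coneGen_add (coneGen_smul_of_mem (haS i) (hc i)) (coneGen_smul_of_mem h (hc i))
    · simp [hxa, hσ, ← Finset.sum_neg_distrib, ← smul_neg]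
  · rintro ⟨⟨n, c, x, hc, hx, hv⟩, hneg⟩
    refine ⟨n, fun i => c i / 2, fun i => x i - σ (x i), fun i => by have := hc i; positivity,
      fun i => ⟨x i, hx i, rfl⟩, ?_⟩
    have hhalf : v = (1 / 2 : ℝ) • (v - σ v) := by
      rw [show σ v = -v from hneg]
      module
    rw [hhalf, hv, map_sum, ← Finset.sum_sub_distrib, Finset.smul_sum]
    refine Finset.sum_congr rfl fun i _ => ?_
    rw [map_smul]
    module
end

section
/- Let n ≥ 1 and let λ, μ, ν ∈ ℝⁿ be weakly decreasing n-tuples. Then there exist complex Hermitian n×n matrices A and B with spec(A) = λ, spec(B) = μ and spec(A+B) = ν if and only if there exist real symmetric n×n matrices A and B with spec(A) = λ, spec(B) = μ and spec(A+B) = ν. -/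
/-!
A real symmetric pair is a Hermitian pair, so the content is the passage from complex to real.

Write the problem symmetrically: for increasing weight vectors `α c` (the reversed `lam`, the
reversed `mu`, and `-nu`), unitary `X c` with `∑ c, (X c)ᴴ * diag (α c) * X c = 0` are given, and
orthogonal `Q c` with `∑ c, (Q c)ᵀ * diag (α c) * Q c = 0` are wanted. The proof is a
Kempf–Ness argument for three weighted flags.

* A solution over `ℂ` makes the flags semistable: on every tensor power of `ℂⁿ` the induced
  operators also sum to zero, so no nonzero tensor lies in steps of the weight filtrations whose
  levels have positive sum (`tens_semistable`). For given levels this says that a linear system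
  with coefficients polynomial in `X` is injective, a Zariski open condition; real points being
  Zariski dense, it also holds at some invertible real matrices `Y c` (`exists_real_semistable`).
* Applied to the antisymmetric tensor of maximal minors of a matrix `W`, semistability yields
  nonvanishing minors of `Y c * W` of nonpositive total weight (`exists_rows`). Hence the sum over
  `c` of the weighted log-volumes of `Y c * H * (Y c)ᵀ` is bounded above over positive definite `H`:
  this is proved near each eigenbasis of `H` (`logVol_le_local`) and extends to all of them by
  compactness of the orthogonal group (`exists_bound`).
* After subtracting a penalty of strength `ε` this function of `H = h * hᵀ` has a maximiser
  (`exists_max`). If `Y c * h = L c * Q c` with `L c` lower triangular and `Q c` orthogonal, the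
  first-order condition shows that `M = ∑ c, (Q c)ᵀ * diag (α c) * Q c` has `tr (M * M) = O(ε)`
  (`exists_moment_eq`). Letting `ε → 0`, compactness gives orthogonal `Q c` with `M = 0`
  (`exists_moment_eq_zero`).
-/

open Matrix

/-! ### Tensor powers and semistability of complex solutions -/

section Tensor

variable {n : ℕ} {κ : Type*} [Fintype κ]

/-- The `κ`-fold tensor power of an `n × n` matrix, in coordinates. -/
def tens {R : Type*} [CommRing R] (κ : Type*) [Fintype κ] (X : Matrix (Fin n) (Fin n) R) :
    Matrix (κ → Fin n) (κ → Fin n) R :=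
  of fun i j => ∏ a, X (i a) (j a)

lemma tens_mul [DecidableEq κ] {R : Type*} [CommRing R] (X Y : Matrix (Fin n) (Fin n) R) :
    tens κ (X * Y) = tens κ X * tens κ Y := by
  ext i j
  simp only [tens, of_apply, mul_apply, ← Finset.prod_mul_distrib]
  rw [Finset.prod_univ_sum, Fintype.piFinset_univ]

lemma tens_one {R : Type*} [CommRing R] :
    tens κ (1 : Matrix (Fin n) (Fin n) R) = 1 := by
  ext i j
  simp only [tens, of_apply, one_apply, Finset.prod_ite_zero, Finset.prod_const_one, funext_iff,
    Finset.mem_univ, true_imp_iff]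

lemma tens_conjTranspose (X : Matrix (Fin n) (Fin n) ℂ) : tens κ Xᴴ = (tens κ X)ᴴ := by
  ext i j
  simp [tens]

variable [DecidableEq κ]

/-- Conjugating the diagonal matrix of weight sums gives the derivation induced by `Xᴴ α X`. -/
lemma tens_diag_apply (X : Matrix (Fin n) (Fin n) ℂ) (hX : Xᴴ * X = 1) (α : Fin n → ℝ)
    (j j' : κ → Fin n) :
    ((tens κ X)ᴴ * diagonal (fun i : κ → Fin n => ((∑ a, α (i a) : ℝ) : ℂ)) * tens κ X) j j' =
      ∑ a, (Xᴴ * diagonal (fun i => (α i : ℂ)) * X) (j a) (j' a) *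
        ∏ b ∈ Finset.univ.erase a, (1 : Matrix (Fin n) (Fin n) ℂ) (j b) (j' b) := by
  have h1 : ∀ a : κ, (Xᴴ * diagonal (fun i => (α i : ℂ)) * X) (j a) (j' a) *
        ∏ b ∈ Finset.univ.erase a, (1 : Matrix (Fin n) (Fin n) ℂ) (j b) (j' b)
      = ∑ i : κ → Fin n, (α (i a) : ℂ) * ∏ b, (star (X (i b) (j b)) * X (i b) (j' b)) := by
    intro a
    have h2 : (Xᴴ * diagonal (fun i => (α i : ℂ)) * X) (j a) (j' a) *
        ∏ b ∈ Finset.univ.erase a, (1 : Matrix (Fin n) (Fin n) ℂ) (j b) (j' b) =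
        ∏ b, ∑ k, (if b = a then (α k : ℂ) else 1) * (star (X k (j b)) * X k (j' b)) := by
      rw [← Finset.mul_prod_erase Finset.univ _ (Finset.mem_univ a)]
      congr 1
      · rw [mul_apply]
        refine Finset.sum_congr rfl fun k _ => ?_
        simp [mul_diagonal]; ring
      · refine Finset.prod_congr rfl fun b hb => ?_
        rw [← hX, mul_apply]
        refine Finset.sum_congr rfl fun k _ => ?_
        simp [(Finset.mem_erase.mp hb).1]
    rw [h2, Finset.prod_univ_sum, Fintype.piFinset_univ]
    refine Finset.sum_congr rfl fun i _ => ?_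
    rw [Finset.prod_mul_distrib]
    simp
  simp only [h1]
  rw [Finset.sum_comm, mul_apply]
  refine Finset.sum_congr rfl fun i _ => ?_
  rw [mul_diagonal, ← Finset.sum_mul, Finset.prod_mul_distrib]
  simp [tens]
  ring

/-- Semistability of the tensor power: for a solution `∑ c, X_cᴴ α_c X_c = 0`, no nonzero tensor
lies simultaneously in steps of the eigenvalue filtrations whose levels have positive sum. -/
lemma tens_semistable {ι : Type*} [Fintype ι] (α : ι → Fin n → ℝ)
    (X : ι → Matrix (Fin n) (Fin n) ℂ) (hX : ∀ c, (X c)ᴴ * X c = 1)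
    (hsum : ∑ c, (X c)ᴴ * diagonal (fun i => (α c i : ℂ)) * X c = 0)
    (s : ι → ℝ) (hs : 0 < ∑ c, s c) (w : (κ → Fin n) → ℂ)
    (hw : ∀ c i, ∑ a, α c (i a) < s c → (tens κ (X c) *ᵥ w) i = 0) : w = 0 := by
  have hz : ∑ c, (tens κ (X c))ᴴ * diagonal (fun i : κ → Fin n => ((∑ a, α c (i a) : ℝ) : ℂ)) *
      tens κ (X c) = 0 := by
    ext j j'
    rw [Matrix.sum_apply]
    simp only [tens_diag_apply _ (hX _)]
    rw [Finset.sum_comm]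
    simp only [← Finset.sum_mul, ← Matrix.sum_apply, hsum]
    simp
  have hq : ∀ c, star w ⬝ᵥ (((tens κ (X c))ᴴ *
      diagonal (fun i : κ → Fin n => ((∑ a, α c (i a) : ℝ) : ℂ)) * tens κ (X c)) *ᵥ w) =
      ((∑ i, (∑ a, α c (i a)) * ‖(tens κ (X c) *ᵥ w) i‖ ^ 2 : ℝ) : ℂ) := by
    intro c
    rw [← mulVec_mulVec, ← mulVec_mulVec, dotProduct_mulVec, ← star_mulVec]
    simp only [dotProduct, mulVec_diagonal, Pi.star_apply]
    push_cast
    refine Finset.sum_congr rfl fun i _ => ?_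
    rw [← Complex.conj_mul', Complex.star_def]
    ring
  have hn : ∀ c, ∑ i, ‖(tens κ (X c) *ᵥ w) i‖ ^ 2 = ∑ i, ‖w i‖ ^ 2 := by
    intro c
    have h1 : ∀ v : (κ → Fin n) → ℂ, ((∑ i, ‖v i‖ ^ 2 : ℝ) : ℂ) = star v ⬝ᵥ v := by
      intro v
      simp only [dotProduct, Pi.star_apply]
      push_cast
      refine Finset.sum_congr rfl fun i _ => ?_
      rw [← Complex.conj_mul', Complex.star_def]
    apply Complex.ofReal_injective
    rw [h1, h1, star_mulVec, ← dotProduct_mulVec, mulVec_mulVec, ← tens_conjTranspose,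
      ← tens_mul, hX, tens_one, one_mulVec]
  have h0 : ∑ c, ∑ i, (∑ a, α c (i a)) * ‖(tens κ (X c) *ᵥ w) i‖ ^ 2 = 0 := by
    apply Complex.ofReal_injective
    rw [Complex.ofReal_sum]
    simp only [← hq]
    rw [← dotProduct_sum, ← Matrix.sum_mulVec, hz]
    simp
  have hge : ∀ c, s c * ∑ i, ‖w i‖ ^ 2 ≤
      ∑ i, (∑ a, α c (i a)) * ‖(tens κ (X c) *ᵥ w) i‖ ^ 2 := by
    intro c
    rw [← hn c, Finset.mul_sum]
    refine Finset.sum_le_sum fun i _ => ?_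
    by_cases h : ∑ a, α c (i a) < s c
    · simp [hw c i h]
    · exact mul_le_mul_of_nonneg_right (not_lt.mp h) (by positivity)
  have h3 := Finset.sum_le_sum fun c (_ : c ∈ Finset.univ) => hge c
  rw [← Finset.sum_mul, h0] at h3
  have h4 : ∑ i, ‖w i‖ ^ 2 = 0 := by
    apply le_antisymm
    · by_contra hc
      nlinarith [mul_pos hs (not_le.mp hc)]
    · positivity
  ext i
  have := (Finset.sum_eq_zero_iff_of_nonneg (fun i _ => by positivity)).mp h4 i (Finset.mem_univ i)
  simpa using this

/-- Multilinear expansion of the determinant of a product of rectangular matrices. -/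
lemma det_mul_expand {R ν : Type*} [CommRing R] [Fintype ν] [DecidableEq ν] (A : Matrix κ ν R)
    (B : Matrix ν κ R) :
    (A * B).det = ∑ j : κ → ν, (∏ a, A a (j a)) * (B.submatrix j id).det := by
  rw [← det_transpose, det_apply']
  simp only [transpose_apply, mul_apply, Finset.prod_univ_sum, Fintype.piFinset_univ]
  simp only [Finset.mul_sum]
  rw [Finset.sum_comm]
  refine Finset.sum_congr rfl fun j _ => ?_
  rw [← det_transpose, det_apply', Finset.mul_sum]
  refine Finset.sum_congr rfl fun σ _ => ?_
  rw [Finset.prod_mul_distrib]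
  simp
  ring

/-- A bound that replaces the Cauchy–Binet formula: every squared maximal minor of `A` is at most
`(card κ)!` times the Gram determinant. -/
lemma sq_minor_le {ν : Type*} [Fintype ν] [DecidableEq ν] (A : Matrix κ ν ℝ) (j : κ → ν) :
    (A.submatrix id j).det ^ 2 ≤ (Fintype.card κ).factorial * (A * Aᵀ).det := by
  have h : ((Fintype.card κ).factorial : ℝ) * (A * Aᵀ).det =
      ∑ j : κ → ν, (A.submatrix id j).det ^ 2 := by
    have h1 : ∀ σ : Equiv.Perm κ, (A * Aᵀ).det =
        ∑ j : κ → ν, ((Equiv.Perm.sign σ : ℤ) : ℝ) * (∏ a, A (σ a) (j a)) *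
          (A.submatrix id j).det := by
      intro σ
      rw [det_mul_expand, ← Equiv.sum_comp (Equiv.arrowCongr σ (Equiv.refl ν))]
      refine Finset.sum_congr rfl fun j _ => ?_
      have e1 : (Aᵀ.submatrix (Equiv.arrowCongr σ (Equiv.refl ν) j) id).det =
          ((Equiv.Perm.sign σ : ℤ) : ℝ) * (A.submatrix id j).det := by
        rw [← det_transpose (A.submatrix id j), ← Equiv.Perm.sign_symm,
          ← det_permute]
        rfl
      have e2 : ∏ a, A a (Equiv.arrowCongr σ (Equiv.refl ν) j a) = ∏ a, A (σ a) (j a) := by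
        rw [← Equiv.prod_comp σ]
        simp [Equiv.arrowCongr]
      rw [e1, e2]
      ring
    have h2 : ∑ σ : Equiv.Perm κ, (A * Aᵀ).det =
        ((Fintype.card κ).factorial : ℝ) * (A * Aᵀ).det := by
      simp [Fintype.card_perm]
    rw [← h2, Finset.sum_congr rfl fun σ _ => h1 σ, Finset.sum_comm]
    refine Finset.sum_congr rfl fun j _ => ?_
    rw [← Finset.sum_mul, sq]
    congr 1
    rw [det_apply']
    rfl
  rw [h]
  exact Finset.single_le_sum (f := fun j => (A.submatrix id j).det ^ 2)
    (fun _ _ => by positivity) (Finset.mem_univ j)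

end Tensor

/-! ### Transfer to real matrices and the numerical criterion -/

section Elimination

open MvPolynomial

/-- Injectivity of a matrix with polynomial entries is an open condition in the Zariski topology:
if it holds at `x₀`, it holds off the zero set of a polynomial not vanishing at `x₀`. -/
lemma exists_poly_injective {σ ρ τ : Type*} [Fintype ρ] [Fintype τ] [DecidableEq ρ]
    [DecidableEq τ] (M : Matrix ρ τ (MvPolynomial σ ℂ)) (x₀ : σ → ℂ)
    (hinj : ∀ w, M.map (eval x₀) *ᵥ w = 0 → w = 0) :
    ∃ D : MvPolynomial σ ℂ, eval x₀ D ≠ 0 ∧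
      ∀ x, eval x D ≠ 0 → ∀ w, M.map (eval x) *ᵥ w = 0 → w = 0 := by
  obtain ⟨g, hg⟩ := LinearMap.exists_leftInverse_of_injective (toLin' (M.map (eval x₀)))
    (LinearMap.ker_eq_bot'.mpr fun w hw => hinj w (by simpa using hw))
  -- The polynomial is `det (L * M)` for a constant left inverse `L` of `M x₀`.
  set L := LinearMap.toMatrix' g with hL
  have hLM : L * M.map (eval x₀) = 1 := by
    have := congrArg LinearMap.toMatrix' hg
    rwa [LinearMap.toMatrix'_comp, LinearMap.toMatrix'_toLin', LinearMap.toMatrix'_id] at this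
  let LC : Matrix τ ρ (MvPolynomial σ ℂ) := L.map C
  have hev : ∀ x, eval x (LC * M).det = (L * M.map (eval x)).det := by
    intro x
    rw [RingHom.map_det, RingHom.mapMatrix_apply, Matrix.map_mul]
    congr 2
    ext i j
    simp [LC]
  refine ⟨(LC * M).det, ?_, fun x hx w hw => ?_⟩
  · rw [hev, hLM, det_one]; exact one_ne_zero
  · rw [hev] at hx
    refine eq_zero_of_mulVec_eq_zero hx ?_
    rw [← mulVec_mulVec, hw, mulVec_zero]

/-- Real points are Zariski dense in complex affine space. -/
lemma exists_real_point {σ τ : Type*} [Finite σ] [Fintype τ] (D : τ → MvPolynomial σ ℂ)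
    (x₀ : σ → ℂ) (h : ∀ k, eval x₀ (D k) ≠ 0) :
    ∃ y : σ → ℝ, ∀ k, eval (fun v => (y v : ℂ)) (D k) ≠ 0 := by
  by_contra hc
  push Not at hc
  have hz : ∏ k, D k = 0 := by
    refine funext_set (fun _ : σ => Set.range ((↑) : ℝ → ℂ))
      (fun _ => Set.infinite_range_of_injective Complex.ofReal_injective) fun x hx => ?_
    choose y hy using fun v => hx v (Set.mem_univ v)
    obtain ⟨k, hk⟩ := hc y
    rw [map_zero, map_prod]
    refine Finset.prod_eq_zero (Finset.mem_univ k) ?_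
    rw [← hk]
    congr 2
    funext v
    exact (hy v).symm
  have := congrArg (eval x₀) hz
  rw [map_prod, map_zero] at this
  exact Finset.prod_ne_zero_iff.mpr (fun k _ => h k) this

/-- Real numerical semistability data: invertible real matrices whose row flags, weighted by `α`,
satisfy the same semistability condition on tensors as a complex solution. -/
lemma exists_real_semistable {n : ℕ} {ι : Type*} [Fintype ι] [DecidableEq ι] (α : ι → Fin n → ℝ)
    (X : ι → Matrix (Fin n) (Fin n) ℂ) (hX : ∀ c, (X c)ᴴ * X c = 1)
    (hsum : ∑ c, (X c)ᴴ * diagonal (fun i => (α c i : ℂ)) * X c = 0) :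
    ∃ Y : ι → Matrix (Fin n) (Fin n) ℝ, (∀ c, (Y c).det ≠ 0) ∧
      ∀ (p : Fin n) (t : ι → {j // j < p} → Fin n), 0 < ∑ c, ∑ a, α c (t c a) →
        ∀ w : ({j // j < p} → Fin n) → ℝ,
          (∀ c i, ∑ a, α c (i a) < ∑ a, α c (t c a) →
            (tens {j // j < p} (Y c) *ᵥ w) i = 0) → w = 0 := by
  classical
  -- The linear conditions on `w`, as a matrix over the polynomial ring in the entries of `Y`.
  let V : ι → Matrix (Fin n) (Fin n) (MvPolynomial (ι × Fin n × Fin n) ℂ) :=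
    fun c => of fun i j => MvPolynomial.X (c, i, j)
  let M : (p : Fin n) → (t : ι → {j // j < p} → Fin n) →
      Matrix (ι × ({j // j < p} → Fin n)) ({j // j < p} → Fin n)
        (MvPolynomial (ι × Fin n × Fin n) ℂ) :=
    fun p t => of fun r j => if ∑ a, α r.1 (r.2 a) < ∑ a, α r.1 (t r.1 a) then
      tens {j // j < p} (V r.1) r.2 j else 0
  let x₀ : ι × Fin n × Fin n → ℂ := fun v => X v.1 v.2.1 v.2.2
  have hM : ∀ (Z : ι → Matrix (Fin n) (Fin n) ℂ) p t w,
      (M p t).map (eval fun v => Z v.1 v.2.1 v.2.2) *ᵥ w = 0 ↔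
      ∀ c i, ∑ a, α c (i a) < ∑ a, α c (t c a) → (tens {j // j < p} (Z c) *ᵥ w) i = 0 := by
    intro Z p t w
    have hrow : ∀ c i, ((M p t).map (eval fun v => Z v.1 v.2.1 v.2.2) *ᵥ w) (c, i) =
        if ∑ a, α c (i a) < ∑ a, α c (t c a) then (tens {j // j < p} (Z c) *ᵥ w) i else 0 := by
      intro c i
      simp only [mulVec, dotProduct, map_apply, M, of_apply]
      split_ifs
      · refine Finset.sum_congr rfl fun j _ => ?_
        simp [tens, V]
      · simp
    rw [funext_iff, Prod.forall]
    refine forall_congr' fun c => forall_congr' fun i => ?_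
    rw [hrow]
    simp
  have hD : ∀ pt : (p : Fin n) × (ι → {j // j < p} → Fin n),
      ∃ D : MvPolynomial (ι × Fin n × Fin n) ℂ, eval x₀ D ≠ 0 ∧
        (0 < ∑ c, ∑ a, α c (pt.2 c a) →
        ∀ x, eval x D ≠ 0 → ∀ w, (M pt.1 pt.2).map (eval x) *ᵥ w = 0 → w = 0) := by
    rintro ⟨p, t⟩
    by_cases ht : 0 < ∑ c, ∑ a, α c (t c a)
    · obtain ⟨D, h1, h2⟩ := exists_poly_injective (M p t) x₀ fun w hw =>
        tens_semistable α X hX hsum _ ht w ((hM X p t w).mp hw)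
      exact ⟨D, h1, fun _ => h2⟩
    · exact ⟨1, by simp, fun h => absurd h ht⟩
  choose D hD0 hD1 using hD
  obtain ⟨y, hy⟩ := exists_real_point
    (Sum.elim D (fun c : ι => (V c).det)) x₀ (by
      rintro (pt | c)
      · exact hD0 pt
      · have : eval x₀ (V c).det = (X c).det := by
          rw [RingHom.map_det]
          congr 1
          ext i j
          simp [V, x₀]
        simp only [Sum.elim_inr, this]
        intro h0
        have := congrArg det (hX c)
        simp [h0] at this)
  refine ⟨fun c => of fun i j => y (c, i, j), fun c h0 => ?_, fun p t ht w hw => ?_⟩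
  · apply hy (Sum.inr c)
    have : eval (fun v => (y v : ℂ)) (V c).det =
        (((of fun i j => y (c, i, j) : Matrix (Fin n) (Fin n) ℝ).det : ℝ) : ℂ) := by
      rw [RingHom.map_det, ← Complex.ofRealHom_eq_coe, RingHom.map_det]
      congr 1
      ext i j
      simp [V]
    simp only [Sum.elim_inr, this, h0, Complex.ofReal_zero]
  · have := hD1 ⟨p, t⟩ ht _ (hy (Sum.inl ⟨p, t⟩)) (fun j => (w j : ℂ))
      ((hM (fun c => of fun i j => (y (c, i, j) : ℂ)) p t _).mpr fun c i hi => by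
        have h := congrArg Complex.ofReal (hw c i hi)
        rw [Complex.ofReal_zero] at h
        rw [← h]
        simp [mulVec, dotProduct, tens])
    ext j
    exact Complex.ofReal_injective (congrFun this j)

end Elimination

section Minors

variable {n : ℕ} {κ : Type*} [Fintype κ] [DecidableEq κ]

lemma exists_minor_ne_zero {ν : Type*} [Fintype ν] [DecidableEq ν] (V : Matrix κ ν ℝ)
    (W : Matrix ν κ ℝ) (h : V * W = 1) : ∃ j : κ → ν, (W.submatrix j id).det ≠ 0 := by
  by_contra hc
  push Not at hc
  have h1 := det_mul_expand V W
  simp [h, hc] at h1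

/-- The maximal minors of `W` are the coordinates of an antisymmetric tensor, on which `tens κ Y`
acts by passing from `W` to `Y * W`. -/
lemma tens_mulVec_minors (Y : Matrix (Fin n) (Fin n) ℝ) (W : Matrix (Fin n) κ ℝ)
    (i : κ → Fin n) :
    (tens κ Y *ᵥ fun j => (W.submatrix j id).det) i = ((Y * W).submatrix i id).det := by
  have : (Y * W).submatrix i id = Y.submatrix i id * W := rfl
  rw [this, det_mul_expand]
  rfl

/-- The numerical criterion for the subspace spanned by the columns of `W`: there are nonvanishing
maximal minors of the matrices `Y c * W` whose row weights have nonpositive total. -/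
lemma exists_rows {ι : Type*} [Fintype ι] (α : ι → Fin n → ℝ)
    (Y : ι → Matrix (Fin n) (Fin n) ℝ) (hY : ∀ c, (Y c).det ≠ 0)
    (hss : ∀ t : ι → κ → Fin n, 0 < ∑ c, ∑ a, α c (t c a) → ∀ w : (κ → Fin n) → ℝ,
      (∀ c i, ∑ a, α c (i a) < ∑ a, α c (t c a) → (tens κ (Y c) *ᵥ w) i = 0) → w = 0)
    (W : Matrix (Fin n) κ ℝ) (V : Matrix κ (Fin n) ℝ) (hVW : V * W = 1) :
    ∃ i : ι → κ → Fin n, (∀ c, ((Y c * W).submatrix (i c) id).det ≠ 0) ∧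
      ∑ c, ∑ a, α c (i c a) ≤ 0 := by
  classical
  have hmin : ∀ c, ∃ i : κ → Fin n, ((Y c * W).submatrix i id).det ≠ 0 ∧
      ∀ i', ((Y c * W).submatrix i' id).det ≠ 0 → ∑ a, α c (i a) ≤ ∑ a, α c (i' a) := by
    intro c
    obtain ⟨j, hj⟩ := exists_minor_ne_zero (V * (Y c)⁻¹) (Y c * W) (by
      rw [Matrix.mul_assoc, ← Matrix.mul_assoc (Y c)⁻¹,
        nonsing_inv_mul _ (isUnit_iff_ne_zero.mpr (hY c)), Matrix.one_mul, hVW])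
    obtain ⟨i, hi, hi'⟩ := Finset.exists_min_image
      (Finset.univ.filter fun i : κ → Fin n => ((Y c * W).submatrix i id).det ≠ 0)
      (fun i => ∑ a, α c (i a)) ⟨j, by simpa using hj⟩
    refine ⟨i, by simpa using hi, fun i' h' => hi' i' (by simpa using h')⟩
  choose i hi hi' using hmin
  refine ⟨i, hi, ?_⟩
  by_contra hc
  have hw := hss i (not_le.mp hc) (fun j => (W.submatrix j id).det) fun c k hk => by
    rw [tens_mulVec_minors]
    by_contra h
    exact absurd (hi' c k h) (not_le.mpr hk)
  obtain ⟨j, hj⟩ := exists_minor_ne_zero V W hVW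
  exact hj (congrFun hw j)

/-- A greedy choice of columns: a nonvanishing maximal minor of `B` which uses, for every `p`,
at least as many columns with index `< p` as the rank of those columns. -/
lemma exists_greedy (B : Matrix κ (Fin n) ℝ) (C : Matrix (Fin n) κ ℝ) (hBC : B * C = 1) :
    ∃ τ : κ → Fin n, (B.submatrix id τ).det ≠ 0 ∧
      ∀ p, (B.submatrix id (Subtype.val : {j // j < p} → Fin n)).rank ≤
        (Finset.univ.filter fun b => τ b < p).card := by
  classical
  obtain ⟨j₀, hj₀⟩ := exists_minor_ne_zero Cᵀ Bᵀ (by rw [← transpose_mul, hBC, transpose_one])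
  have hj₁ : (B.submatrix id j₀).det ≠ 0 := by
    rw [← det_transpose]; exact hj₀
  obtain ⟨τ, hτ, hmin⟩ := Finset.exists_min_image
    (Finset.univ.filter fun i : κ → Fin n => (B.submatrix id i).det ≠ 0)
    (fun i => ∑ a, (i a : ℕ)) ⟨j₀, by simpa using hj₁⟩
  replace hτ : (B.submatrix id τ).det ≠ 0 := by simpa using hτ
  refine ⟨τ, hτ, fun p => ?_⟩
  set A := B.submatrix id τ with hA
  -- By Cramer's rule and minimality, column `j` only involves the chosen columns up to `j`.
  have hcr : ∀ j b, j < τ b → cramer A (fun k => B k j) b = 0 := by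
    intro j b hjb
    by_contra hne
    rw [cramer_apply] at hne
    have hup : A.updateCol b (fun k => B k j) = B.submatrix id (Function.update τ b j) := by
      ext k l
      by_cases hl : l = b
      · subst hl; simp
      · simp [hl, hA]
    rw [hup] at hne
    have := hmin (Function.update τ b j) (by simpa using hne)
    have hlt : ∑ a, (Function.update τ b j a : ℕ) < ∑ a, (τ a : ℕ) := by
      refine Finset.sum_lt_sum (fun a _ => ?_) ⟨b, Finset.mem_univ b, ?_⟩
      · by_cases ha : a = b
        · subst ha; simpa using hjb.le
        · simp [ha]
      · simpa using hjb
    omega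
  have hfac : B.submatrix id (Subtype.val : {j // j < p} → Fin n) =
      B.submatrix id (fun b : {b // τ b < p} => τ b) *
        (of fun (b : {b // τ b < p}) (j : {j // j < p}) =>
          A.det⁻¹ * cramer A (fun k => B k j) b) := by
    ext k j
    have h1 := congrFun (mulVec_cramer A (fun k => B k j)) k
    simp only [mulVec, dotProduct, Pi.smul_apply, smul_eq_mul] at h1
    have h2 : ∑ b, A k b * cramer A (fun k => B k j) b =
        ∑ b : {b // τ b < p}, A k b * cramer A (fun k => B k j) b := by
      rw [← Finset.sum_subtype (Finset.univ.filter fun b => τ b < p) (by simp)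
        (fun b => A k b * cramer A (fun k => B k j) b)]
      refine (Finset.sum_filter_of_ne fun b _ hb => ?_).symm
      by_contra hlt
      exact hb (by rw [hcr j b (j.2.trans_le (not_lt.mp hlt)), mul_zero])
    rw [h2] at h1
    simp only [submatrix_apply, id, mul_apply, of_apply]
    rw [← mul_right_inj' hτ, ← h1, Finset.mul_sum]
    refine Finset.sum_congr rfl fun b _ => ?_
    simp only [hA, submatrix_apply, id]
    rw [← hA]
    field_simp
  rw [hfac]
  refine (rank_mul_le_left _ _).trans ((rank_le_card_width _).trans ?_)
  rw [Fintype.card_subtype]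

end Minors

/-! ### Boundedness of the weighted log-volume near an eigenbasis -/

section Bound

variable {n : ℕ}

lemma card_le_rank (N : Matrix (Fin n) (Fin n) ℝ) (m p : Fin n) (i : {j // j < p} → Fin n)
    (hi : ((N.submatrix id (Subtype.val : {j // j < p} → Fin n)).submatrix i id).det ≠ 0) :
    (Finset.univ.filter fun a => i a < m).card ≤
      ((N.submatrix (Subtype.val : {j // j < m} → Fin n) id).submatrix id
        (Subtype.val : {j // j < p} → Fin n)).rank := by
  set R := (N.submatrix id (Subtype.val : {j // j < p} → Fin n)).submatrix i id with hR
  set P := (N.submatrix (Subtype.val : {j // j < m} → Fin n) id).submatrix id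
        (Subtype.val : {j // j < p} → Fin n) with hP
  have h1 : LinearIndependent ℝ R.row := linearIndependent_rows_of_det_ne_zero hi
  have h2 := h1.comp (Subtype.val : {a // i a < m} → {j // j < p}) Subtype.val_injective
  have h3 : (R.submatrix (Subtype.val : {a // i a < m} → {j // j < p}) id).rank =
      Fintype.card {a // i a < m} := LinearIndependent.rank_matrix h2
  rw [← Fintype.card_subtype, ← h3]
  exact rank_submatrix_le P (fun a : {a // i a < m} => (⟨i a, a.2⟩ : {j // j < m})) id

/-- A monotone weight vector is its top value minus nonnegative multiples of the indicators of
the initial segments `{i | i < m}`. -/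
lemma exists_layers (α : Fin n → ℝ) (hα : Monotone α) :
    ∃ (top : ℝ) (g : Fin n → ℝ), (∀ m, 0 ≤ g m) ∧
      ∀ i, α i = top - ∑ m, if i < m then g m else 0 := by
  have key : ∀ (k : ℕ) (β : Fin (k + 1) → ℝ), Monotone β → ∃ g : Fin (k + 1) → ℝ,
      (∀ m, 0 ≤ g m) ∧ ∀ i, β i = β (Fin.last k) - ∑ m, if i < m then g m else 0 := by
    intro k
    induction k with
    | zero =>
      intro β _
      refine ⟨0, fun _ => le_rfl, fun i => ?_⟩
      obtain rfl : i = Fin.last 0 := Fin.ext (by omega)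
      simp
    | succ k ih =>
      intro β hβ
      obtain ⟨g, hg, h⟩ := ih (fun i => β i.castSucc) fun i j hij => hβ (by simpa using hij)
      refine ⟨Fin.snoc g (β (Fin.last _) - β (Fin.last k).castSucc), fun m => ?_, fun i => ?_⟩
      · induction m using Fin.lastCases with
        | last => simpa using hβ (Fin.le_last _)
        | cast m => simpa using hg m
      · rw [Fin.sum_univ_castSucc]
        induction i using Fin.lastCases with
        | last => simp [not_lt.mpr (Fin.le_last _)]
        | cast i =>
          have := h i
          simp only [Fin.snoc_castSucc, Fin.castSucc_lt_castSucc_iff, Fin.snoc_last,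
            Fin.castSucc_lt_last, if_true]
          linarith
  rcases n with _ | k
  · exact ⟨0, 0, fun _ => le_rfl, fun i => i.elim0⟩
  · obtain ⟨g, hg, h⟩ := key k α hα
    exact ⟨_, g, hg, h⟩

/-- Lower bound for the log-determinant of a weighted Gram matrix by a single maximal minor. -/
lemma log_gram_ge {κ : Type*} [Fintype κ] [DecidableEq κ] (N : Matrix κ (Fin n) ℝ)
    (d : Fin n → ℝ) (hd : ∀ j, 0 < d j) (τ : κ → Fin n) (hτ : (N.submatrix id τ).det ≠ 0) :
    ∑ b, Real.log (d (τ b)) + Real.log ((N.submatrix id τ).det ^ 2) -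
      Real.log (Fintype.card κ).factorial ≤ Real.log (N * diagonal d * Nᵀ).det := by
  have h := sq_minor_le (N * diagonal fun j => √(d j)) τ
  have h1 : N * (diagonal fun j => √(d j)) * (N * diagonal fun j => √(d j))ᵀ =
      N * diagonal d * Nᵀ := by
    rw [transpose_mul, diagonal_transpose, Matrix.mul_assoc, ← Matrix.mul_assoc (diagonal _),
      diagonal_mul_diagonal, ← Matrix.mul_assoc]
    congr 3
    funext j
    exact Real.mul_self_sqrt (hd j).le
  have h2 : (N * diagonal fun j => √(d j)).submatrix id τ =
      N.submatrix id τ * diagonal fun b => √(d (τ b)) := by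
    ext a b
    simp [mul_diagonal]
  have h3 : (∏ b, √(d (τ b))) ^ 2 = ∏ b, d (τ b) := by
    rw [← Finset.prod_pow]
    exact Finset.prod_congr rfl fun b _ => Real.sq_sqrt (hd _).le
  rw [h1, h2, det_mul, det_diagonal, mul_pow, h3] at h
  have hp : 0 < ∏ b, d (τ b) := Finset.prod_pos fun b _ => hd _
  have hm : 0 < (N.submatrix id τ).det ^ 2 := by positivity
  have hf : (0 : ℝ) < (Fintype.card κ).factorial := by exact_mod_cast Nat.factorial_pos _
  have hdet : 0 < (N * diagonal d * Nᵀ).det := by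
    by_contra hc
    nlinarith [mul_pos hm hp, mul_nonneg hf.le (neg_nonneg.mpr (not_lt.mp hc))]
  have h4 := Real.log_le_log (mul_pos hm hp) h
  rw [Real.log_mul hm.ne' hp.ne', Real.log_mul hf.ne' hdet.ne',
    Real.log_prod (fun b _ => (hd _).ne')] at h4
  linarith

/-- The leading principal submatrix on the indices `< m`. -/
def lead (m : Fin n) (Z : Matrix (Fin n) (Fin n) ℝ) : Matrix {i // i < m} {i // i < m} ℝ :=
  Z.submatrix Subtype.val Subtype.val

/-- The weighted logarithmic volume of a Gram matrix `Z`, for the weight vector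
`i ↦ top - ∑ m, [i < m] g m`. If `Z = L Lᵀ` with `L` lower triangular, this is
`∑ i, α i * log (L i i ^ 2)`. -/
noncomputable def logVol (top : ℝ) (g : Fin n → ℝ) (Z : Matrix (Fin n) (Fin n) ℝ) : ℝ :=
  top * Real.log Z.det - ∑ m, g m * Real.log (lead m Z).det

/-- The total weight of the rows `i`, computed layer by layer. -/
lemma sum_layers {κ : Type*} [Fintype κ] (top : ℝ) (g : Fin n → ℝ) (i : κ → Fin n) :
    ∑ a, (top - ∑ m, if i a < m then g m else 0) =
      Fintype.card κ * top - ∑ m, g m * (Finset.univ.filter fun a => i a < m).card := by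
  rw [Finset.sum_sub_distrib, Finset.sum_comm]
  congr 1
  · simp
  · refine Finset.sum_congr rfl fun m _ => ?_
    rw [← Finset.sum_filter, Finset.sum_const, nsmul_eq_mul, mul_comm]

open Topology Filter in
/-- Upper bound for one weighted flag near a fixed eigenbasis `U₀`: the growth in the eigenvalues
`d` is controlled by the weights of nonvanishing minors of `Y * U₀`. -/
lemma logVol_le_local (top : ℝ) (g : Fin n → ℝ) (hg : ∀ m, 0 ≤ g m)
    (Y : Matrix (Fin n) (Fin n) ℝ) (hY : Y.det ≠ 0) (U₀ : Matrix (Fin n) (Fin n) ℝ)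
    (hU₀ : U₀ * U₀ᵀ = 1) (i : (p : Fin n) → {j // j < p} → Fin n)
    (hi : ∀ p, ((Y * U₀.submatrix id (Subtype.val : {j // j < p} → Fin n)).submatrix
      (i p) id).det ≠ 0) :
    ∃ K : ℝ, ∀ᶠ U in 𝓝 U₀, U * Uᵀ = 1 → ∀ d : Fin n → ℝ, (∀ j, 0 < d j) →
      ∀ (bot : ℝ) (e : Fin n → ℝ), (∀ p, 0 ≤ e p) →
        (∀ j, Real.log (d j) = bot + ∑ p, if j < p then e p else 0) →
        logVol top g (Y * (U * diagonal d * Uᵀ) * Yᵀ) ≤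
          K + bot * ∑ k, (top - ∑ m, if k < m then g m else 0) +
            ∑ p, e p * ∑ a, (top - ∑ m, if i p a < m then g m else 0) := by
  set N₀ := Y * U₀ with hN₀
  have hN₀det : N₀.det ≠ 0 := by
    have : U₀.det ≠ 0 := by
      intro h0
      have := congrArg det hU₀
      simp [h0] at this
    rw [hN₀, det_mul]
    exact mul_ne_zero hY this
  have hex : ∀ m : Fin n, ∃ τ : {j // j < m} → Fin n,
      ((N₀.submatrix (Subtype.val : {j // j < m} → Fin n) id).submatrix id τ).det ≠ 0 ∧
      ∀ p, (Finset.univ.filter fun a => i p a < m).card ≤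
        (Finset.univ.filter fun b => τ b < p).card := by
    intro m
    obtain ⟨τ, h1, h2⟩ := exists_greedy (N₀.submatrix (Subtype.val : {j // j < m} → Fin n) id)
      (N₀⁻¹.submatrix id (Subtype.val : {j // j < m} → Fin n)) (by
        rw [← submatrix_mul _ _ _ _ _ Function.bijective_id,
          mul_nonsing_inv _ (isUnit_iff_ne_zero.mpr hN₀det)]
        exact submatrix_one _ Subtype.val_injective)
    exact ⟨τ, h1, fun p => (card_le_rank N₀ m p (i p) (hi p)).trans (h2 p)⟩
  choose τ hτ hcnt using hex
  let F : Fin n → Matrix (Fin n) (Fin n) ℝ → ℝ := fun m U =>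
    (((Y * U).submatrix (Subtype.val : {j // j < m} → Fin n) id).submatrix id (τ m)).det
  have hF : ∀ m, Continuous (F m) := by
    intro m
    apply Continuous.matrix_det
    apply Continuous.matrix_submatrix
    apply Continuous.matrix_submatrix
    exact continuous_const.matrix_mul continuous_id
  have hev : ∀ᶠ U in 𝓝 U₀, ∀ m, F m U ≠ 0 ∧ Real.log (F m U₀ ^ 2) - 1 < Real.log (F m U ^ 2) := by
    rw [eventually_all]
    intro m
    have h0 : F m U₀ ≠ 0 := hτ m
    refine ((hF m).continuousAt.eventually_ne h0).and ?_
    have hc : ContinuousAt (fun U => Real.log (F m U ^ 2)) U₀ :=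
      ContinuousAt.log (by fun_prop) (by positivity)
    exact hc.eventually_const_lt (by linarith)
  refine ⟨top * Real.log (Y.det ^ 2) + ∑ m, g m *
    (1 - Real.log (F m U₀ ^ 2) + Real.log (Fintype.card {j // j < m}).factorial), ?_⟩
  filter_upwards [hev] with U hU hUU d hd bot e he hlog
  have hdetU : U.det ^ 2 = 1 := by
    have := congrArg det hUU
    rwa [det_mul, det_transpose, det_one, ← sq] at this
  have hdet : Real.log (Y * (U * diagonal d * Uᵀ) * Yᵀ).det =
      Real.log (Y.det ^ 2) + ∑ j, Real.log (d j) := by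
    have : (Y * (U * diagonal d * Uᵀ) * Yᵀ).det = Y.det ^ 2 * ∏ j, d j := by
      simp only [det_mul, det_transpose, det_diagonal]
      linear_combination (Y.det ^ 2 * ∏ j, d j) * hdetU
    rw [this, Real.log_mul (by positivity) (Finset.prod_pos fun j _ => hd j).ne',
      Real.log_prod fun j _ => (hd j).ne']
  have hcount : ∀ {κ : Type} [Fintype κ] (f : κ → Fin n), ∑ b, Real.log (d (f b)) =
      Fintype.card κ * bot + ∑ p, e p * (Finset.univ.filter fun b => f b < p).card := by
    intro κ _ f
    have := sum_layers (-bot) e f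
    rw [← neg_inj, ← Finset.sum_neg_distrib]
    simp only [hlog, neg_add]
    simp only [sub_eq_add_neg] at this
    rw [this]
    ring
  have hlead : ∀ m, Fintype.card {j // j < m} * bot +
      ∑ p, e p * (Finset.univ.filter fun a => i p a < m).card - (1 - Real.log (F m U₀ ^ 2) +
        Real.log (Fintype.card {j // j < m}).factorial) ≤
      Real.log (lead m (Y * (U * diagonal d * Uᵀ) * Yᵀ)).det := by
    intro m
    have h1 := log_gram_ge ((Y * U).submatrix (Subtype.val : {j // j < m} → Fin n) id) d hd (τ m)
      (hU m).1
    have h2 : lead m (Y * (U * diagonal d * Uᵀ) * Yᵀ) =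
        (Y * U).submatrix (Subtype.val : {j // j < m} → Fin n) id * diagonal d *
          ((Y * U).submatrix (Subtype.val : {j // j < m} → Fin n) id)ᵀ := by
      have : Y * (U * diagonal d * Uᵀ) * Yᵀ = (Y * U) * diagonal d * (Y * U)ᵀ := by
        simp only [transpose_mul, Matrix.mul_assoc]
      rw [this]
      rfl
    rw [h2]
    refine le_trans ?_ h1
    rw [hcount (τ m)]
    have h3 : ∑ p, e p * ((Finset.univ.filter fun a => i p a < m).card : ℝ) ≤
        ∑ p, e p * ((Finset.univ.filter fun b => τ m b < p).card : ℝ) :=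
      Finset.sum_le_sum fun p _ => mul_le_mul_of_nonneg_left (by exact_mod_cast hcnt m p) (he p)
    have h4 := (hU m).2
    simp only [F] at h4 ⊢
    linarith
  have hsum := Finset.sum_le_sum fun m (_ : m ∈ Finset.univ) =>
    mul_le_mul_of_nonneg_left (hlead m) (hg m)
  rw [logVol, hdet, hcount (fun j => j)]
  have e1 := sum_layers top g (fun j : Fin n => j)
  simp only [sum_layers] at e1 ⊢
  have hcard : ∀ p : Fin n, (Finset.univ.filter fun b : Fin n => b < p).card =
      Fintype.card {j // j < p} := fun p => (Fintype.card_subtype _).symm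
  simp only [hcard] at *
  have e2 : ∑ p, e p * (Fintype.card {j // j < p} * top -
      ∑ m, g m * ((Finset.univ.filter fun a => i p a < m).card : ℝ)) =
      top * ∑ p, e p * Fintype.card {j // j < p} -
      ∑ m, g m * ∑ p, e p * ((Finset.univ.filter fun a => i p a < m).card : ℝ) := by
    simp only [mul_sub, Finset.sum_sub_distrib, Finset.mul_sum]
    congr 1
    · exact Finset.sum_congr rfl fun p _ => by ring
    · rw [Finset.sum_comm]
      exact Finset.sum_congr rfl fun p _ => Finset.sum_congr rfl fun m _ => by ring
  rw [e2]
  simp only [mul_sub, mul_add, Finset.sum_sub_distrib, Finset.sum_add_distrib] at hsum ⊢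
  have e3 : ∑ m, g m * (Fintype.card {j // j < m} * bot) =
      bot * ∑ m, g m * Fintype.card {j // j < m} := by
    rw [Finset.mul_sum]; exact Finset.sum_congr rfl fun m _ => by ring
  rw [e3] at hsum
  linarith

end Bound

/-! ### Orthogonal and triangular factorisations, derivatives of log-determinants -/

section Variation

variable {n : ℕ}

/-- A Hermitian matrix is unitarily conjugate to the diagonal matrix of the roots of its
characteristic polynomial, listed in any prescribed order. -/
lemma exists_conj {𝕜 : Type*} [RCLike 𝕜] (A : Matrix (Fin n) (Fin n) 𝕜) (hA : A.IsHermitian)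
    (a : Fin n → ℝ)
    (h : A.charpoly = ∏ i, (Polynomial.X - Polynomial.C (a i : 𝕜))) :
    ∃ V : Matrix (Fin n) (Fin n) 𝕜, Vᴴ * V = 1 ∧ V * Vᴴ = 1 ∧
      A = Vᴴ * diagonal (fun i => (a i : 𝕜)) * V := by
  set B : Matrix (Fin n) (Fin n) 𝕜 := diagonal (fun i => (a i : 𝕜)) with hBdef
  have hB : B.IsHermitian := by
    rw [hBdef, isHermitian_diagonal_iff]
    intro i
    simp [isSelfAdjoint_iff]
  have hev : hA.eigenvalues = hB.eigenvalues :=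
    (hA.eigenvalues_eq_eigenvalues_iff hB).mpr (by rw [h, hBdef, charpoly_diagonal])
  have h1 := hA.spectral_theorem
  have h2 := hB.conjStarAlgAut_star_eigenvectorUnitary
  rw [hev, ← h2, Unitary.conjStarAlgAut_star_apply, Unitary.conjStarAlgAut_apply] at h1
  set P := hA.eigenvectorUnitary
  set R := hB.eigenvectorUnitary
  have hP1 : star (P : Matrix (Fin n) (Fin n) 𝕜) * P = 1 := Unitary.coe_star_mul_self P
  have hP2 : (P : Matrix (Fin n) (Fin n) 𝕜) * star (P : Matrix (Fin n) (Fin n) 𝕜) = 1 :=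
    Unitary.coe_mul_star_self P
  have hR1 : star (R : Matrix (Fin n) (Fin n) 𝕜) * R = 1 := Unitary.coe_star_mul_self R
  have hR2 : (R : Matrix (Fin n) (Fin n) 𝕜) * star (R : Matrix (Fin n) (Fin n) 𝕜) = 1 :=
    Unitary.coe_mul_star_self R
  have hV : ((R : Matrix (Fin n) (Fin n) 𝕜) * star (P : Matrix (Fin n) (Fin n) 𝕜))ᴴ =
      (P : Matrix (Fin n) (Fin n) 𝕜) * star (R : Matrix (Fin n) (Fin n) 𝕜) := by
    rw [← star_eq_conjTranspose, star_mul, star_star]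
  refine ⟨R * star (P : Matrix (Fin n) (Fin n) 𝕜), ?_, ?_, ?_⟩
  · rw [hV, Matrix.mul_assoc, ← Matrix.mul_assoc (star (R : Matrix (Fin n) (Fin n) 𝕜)), hR1,
      Matrix.one_mul, hP2]
  · rw [hV, Matrix.mul_assoc, ← Matrix.mul_assoc (star (P : Matrix (Fin n) (Fin n) 𝕜)), hP1,
      Matrix.one_mul, hR2]
  · rw [hV]
    simpa only [Matrix.mul_assoc] using! h1

lemma isCompact_orthogonal : IsCompact {U : Matrix (Fin n) (Fin n) ℝ | U * Uᵀ = 1} := by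
  have hK : IsCompact (Set.pi Set.univ fun _ : Fin n => Set.pi Set.univ fun _ : Fin n =>
      Set.Icc (-1 : ℝ) 1) :=
    isCompact_univ_pi fun _ => isCompact_univ_pi fun _ => isCompact_Icc
  refine hK.of_isClosed_subset ?_ ?_
  · exact isClosed_eq (continuous_id.matrix_mul continuous_id.matrix_transpose) continuous_const
  · intro (U : Matrix (Fin n) (Fin n) ℝ) (hU : U * Uᵀ = 1) i _ j _
    have h1 : ∑ k, U i k ^ 2 = 1 := by
      have := congrFun (congrFun hU i) i
      rw [mul_apply, one_apply_eq] at this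
      simpa [sq] using this
    have h2 : U i j ^ 2 ≤ 1 := by
      rw [← h1]
      exact Finset.single_le_sum (f := fun k => U i k ^ 2) (fun _ _ => sq_nonneg _)
        (Finset.mem_univ j)
    exact abs_le.mp ((sq_le_one_iff_abs_le_one _).mp h2)

/-- The LQ decomposition, by Gram–Schmidt on the rows. -/
lemma exists_LQ (Z : Matrix (Fin n) (Fin n) ℝ) :
    ∃ L Q : Matrix (Fin n) (Fin n) ℝ, Z = L * Q ∧ Q * Qᵀ = 1 ∧ ∀ i j, i < j → L i j = 0 := by
  let f : Fin n → EuclideanSpace ℝ (Fin n) := fun i => WithLp.toLp 2 (Z i)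
  let b := InnerProductSpace.gramSchmidtOrthonormalBasis (𝕜 := ℝ) (by simp) f
  refine ⟨of fun i j => inner ℝ (b j) (f i), of fun i j => b i j, ?_, ?_, ?_⟩
  · ext i k
    have := congrArg (fun v : EuclideanSpace ℝ (Fin n) => v k) (b.sum_repr' (f i))
    simp only [f] at this
    rw [mul_apply]
    simp only [of_apply]
    rw [← this]
    simp [f]
  · ext i j
    have := orthonormal_iff_ite.mp b.orthonormal i j
    rw [mul_apply, one_apply, ← this]
    simp [PiLp.inner_apply, mul_comm]
  · intro i j hij
    exact InnerProductSpace.gramSchmidtOrthonormalBasis_inv_triangular (𝕜 := ℝ) (by simp) f hij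

/-- Leading principal submatrices are compatible with lower triangular congruence. -/
lemma lead_conj (L Z : Matrix (Fin n) (Fin n) ℝ) (hL : ∀ i j, i < j → L i j = 0) (m : Fin n) :
    lead m (L * Z * Lᵀ) = lead m L * lead m Z * (lead m L)ᵀ := by
  have key : ∀ (i : {i // i < m}) (f : Fin n → ℝ),
      ∑ k, L i k * f k = ∑ k : {k // k < m}, L i k * f k := by
    intro i f
    rw [← Finset.sum_subtype (Finset.univ.filter fun k => k < m) (by simp)
      (fun k => L i k * f k)]
    refine (Finset.sum_filter_of_ne fun k _ hk => ?_).symm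
    by_contra hlt
    exact hk (by rw [hL i k (i.2.trans_le (not_lt.mp hlt)), zero_mul])
  ext i j
  simp only [lead, submatrix_apply, mul_apply, transpose_apply]
  calc ∑ x, (∑ y, L i y * Z y x) * L j x
      = ∑ x, L j x * ∑ y, L i y * Z y x := Finset.sum_congr rfl fun x _ => mul_comm _ _
    _ = ∑ x : {k // k < m}, L j x * ∑ y, L i y * Z y x := key j _
    _ = _ := Finset.sum_congr rfl fun x _ => by rw [key i, mul_comm]

lemma lead_det_ne_zero (L : Matrix (Fin n) (Fin n) ℝ) (hL : ∀ i j, i < j → L i j = 0)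
    (hdet : L.det ≠ 0) (m : Fin n) : (lead m L).det ≠ 0 := by
  rw [det_of_isLowerTriangular L fun i j hij => hL i j hij] at hdet
  rw [det_of_isLowerTriangular (lead m L) fun i j hij => hL i j hij]
  exact Finset.prod_ne_zero_iff.mpr fun i _ =>
    Finset.prod_ne_zero_iff.mp hdet i.1 (Finset.mem_univ _)

lemma lead_one (m : Fin n) : lead m (1 : Matrix (Fin n) (Fin n) ℝ) = 1 :=
  submatrix_one _ Subtype.val_injective

lemma lead_gram_det_pos (k : Matrix (Fin n) (Fin n) ℝ) (hk : k.det ≠ 0) (m : Fin n) :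
    0 < (lead m (k * kᵀ)).det := by
  obtain ⟨L, Q, rfl, hQ, hL⟩ := exists_LQ k
  have h1 : L * Q * (L * Q)ᵀ = L * 1 * Lᵀ := by
    rw [transpose_mul, Matrix.mul_assoc, ← Matrix.mul_assoc Q, hQ, Matrix.mul_one, Matrix.one_mul]
  have hLd : L.det ≠ 0 := by rw [det_mul] at hk; exact left_ne_zero_of_mul hk
  rw [h1, lead_conj L 1 hL, lead_one, Matrix.mul_one, det_mul, det_transpose, ← sq]
  have := lead_det_ne_zero L hL hLd m
  positivity

lemma logVol_smul (top : ℝ) (g : Fin n → ℝ) (Z : Matrix (Fin n) (Fin n) ℝ) (hZ : 0 < Z.det)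
    (hZ' : ∀ m, 0 < (lead m Z).det) (s : ℝ) (hs : 0 < s) :
    logVol top g (s • Z) = logVol top g Z +
      Real.log s * ∑ i, (top - ∑ m, if i < m then g m else 0) := by
  have h1 : ∀ m, lead m (s • Z) = s • lead m Z := fun m => rfl
  have h2 := sum_layers top g (fun j : Fin n => j)
  rw [h2]
  simp only [logVol, h1, det_smul]
  rw [Real.log_mul (by positivity) hZ.ne', Real.log_pow]
  have h3 : ∀ m : Fin n, g m * Real.log (s ^ Fintype.card {i // i < m} * (lead m Z).det) =
      g m * Real.log (lead m Z).det +
      Real.log s * (g m * (Finset.univ.filter fun i : Fin n => i < m).card) := by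
    intro m
    rw [Real.log_mul (by positivity) (hZ' m).ne', Real.log_pow, Fintype.card_subtype]
    ring
  simp only [h3, Finset.sum_add_distrib, ← Finset.mul_sum]
  ring

lemma hasDerivAt_log_det {κ : Type*} [Fintype κ] [DecidableEq κ] (D : ℝ) (hD : D ≠ 0)
    (M : Matrix κ κ ℝ) :
    HasDerivAt (fun t : ℝ => Real.log (D * (1 + t • M).det)) M.trace 0 := by
  have h1 : HasDerivAt (fun t : ℝ => (1 + t • M).det) M.trace 0 := by
    rw [funext fun t : ℝ => det_one_add_smul t M]
    have h2 : ∀ p : Polynomial ℝ, HasDerivAt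
        (fun t : ℝ => 1 + M.trace * t + Polynomial.eval t p * t ^ 2) M.trace 0 := by
      intro p
      have h3 := (((hasDerivAt_id (0 : ℝ)).const_mul M.trace).const_add 1).add
        ((p.hasDerivAt 0).mul ((hasDerivAt_id (0 : ℝ)).pow 2))
      convert! h3 using 1
      simp
    exact h2 _
  have h4 := (h1.const_mul D).log (by simpa using hD)
  convert! h4 using 1
  simp
  field_simp

end Variation

/-! ### Maximisers of the penalised energy -/

section Maximum

variable {n : ℕ} {ι : Type*} [Fintype ι]

open Topology Filter in
/-- The sum of the weighted logarithmic volumes of `Y c * H * (Y c)ᵀ` is bounded above, uniformly in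
positive definite `H = U * diagonal d * Uᵀ`. -/
lemma exists_bound_diag (α : ι → Fin n → ℝ) (top : ι → ℝ) (g : ι → Fin n → ℝ)
    (hg : ∀ c m, 0 ≤ g c m) (hα : ∀ c i, α c i = top c - ∑ m, if i < m then g c m else 0)
    (hsum : ∑ c, ∑ i, α c i = 0)
    (Y : ι → Matrix (Fin n) (Fin n) ℝ) (hY : ∀ c, (Y c).det ≠ 0)
    (hss : ∀ (p : Fin n) (t : ι → {j // j < p} → Fin n), 0 < ∑ c, ∑ a, α c (t c a) →
        ∀ w : ({j // j < p} → Fin n) → ℝ,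
          (∀ c i, ∑ a, α c (i a) < ∑ a, α c (t c a) →
            (tens {j // j < p} (Y c) *ᵥ w) i = 0) → w = 0) :
    ∃ C : ℝ, ∀ U : Matrix (Fin n) (Fin n) ℝ, U * Uᵀ = 1 → ∀ d : Fin n → ℝ, (∀ j, 0 < d j) →
      Antitone d → ∑ c, logVol (top c) (g c) (Y c * (U * diagonal d * Uᵀ) * (Y c)ᵀ) ≤ C := by
  -- The bound near a single eigenbasis.
  have hloc : ∀ U₀ : Matrix (Fin n) (Fin n) ℝ, U₀ * U₀ᵀ = 1 → ∃ C : ℝ, ∀ᶠ U in 𝓝 U₀,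
      U * Uᵀ = 1 → ∀ d : Fin n → ℝ, (∀ j, 0 < d j) → Antitone d →
        ∑ c, logVol (top c) (g c) (Y c * (U * diagonal d * Uᵀ) * (Y c)ᵀ) ≤ C := by
    intro U₀ hU₀
    have hU₀' : U₀ᵀ * U₀ = 1 := mul_eq_one_comm.mp hU₀
    have hrows := fun p : Fin n => exists_rows α Y hY (hss p)
      (U₀.submatrix id (Subtype.val : {j // j < p} → Fin n))
      (U₀ᵀ.submatrix (Subtype.val : {j // j < p} → Fin n) id) (by
        rw [← submatrix_mul _ _ _ _ _ Function.bijective_id, hU₀']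
        exact submatrix_one _ Subtype.val_injective)
    choose i hi hneg using hrows
    have hK := fun c => logVol_le_local (top c) (g c) (hg c) (Y c) (hY c) U₀ hU₀
      (fun p => i p c) (fun p => hi p c)
    choose K hK using hK
    refine ⟨∑ c, K c, ?_⟩
    filter_upwards [eventually_all.mpr hK] with U hU hUU d hd hanti
    obtain ⟨t, e, he, hlog⟩ := exists_layers (fun j => -Real.log (d j))
      fun a b hab => neg_le_neg (Real.log_le_log (hd b) (hanti hab))
    have hlog' : ∀ j, Real.log (d j) = -t + ∑ p, if j < p then e p else 0 := fun j => by
      linarith [hlog j]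
    calc ∑ c, logVol (top c) (g c) (Y c * (U * diagonal d * Uᵀ) * (Y c)ᵀ)
        ≤ ∑ c, (K c + -t * ∑ k, α c k + ∑ p, e p * ∑ a, α c (i p c a)) :=
          Finset.sum_le_sum fun c _ => by
            simpa only [hα] using hU c hUU d hd (-t) e he hlog'
      _ = ∑ c, K c + -t * ∑ c, ∑ k, α c k + ∑ p, e p * ∑ c, ∑ a, α c (i p c a) := by
          rw [Finset.sum_add_distrib, Finset.sum_add_distrib, ← Finset.mul_sum]
          congr 1
          rw [Finset.sum_comm]
          exact Finset.sum_congr rfl fun p _ => (Finset.mul_sum _ _ _).symm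
      _ ≤ ∑ c, K c := by
          rw [hsum, mul_zero, add_zero]
          have : ∑ p, e p * ∑ c, ∑ a, α c (i p c a) ≤ 0 :=
            Finset.sum_nonpos fun p _ => mul_nonpos_of_nonneg_of_nonpos (he p) (hneg p)
          linarith
  let P : Set (Matrix (Fin n) (Fin n) ℝ) → Prop := fun S => ∃ C : ℝ, ∀ U ∈ S,
      U * Uᵀ = 1 → ∀ d : Fin n → ℝ, (∀ j, 0 < d j) → Antitone d →
        ∑ c, logVol (top c) (g c) (Y c * (U * diagonal d * Uᵀ) * (Y c)ᵀ) ≤ C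
  have hP : P {U | U * Uᵀ = 1} := by
    refine isCompact_orthogonal.induction_on (p := P) ⟨0, fun U hU => hU.elim⟩ ?_ ?_ ?_
    · rintro s t hst ⟨C, hC⟩
      exact ⟨C, fun U hU => hC U (hst hU)⟩
    · rintro s t ⟨C, hC⟩ ⟨C', hC'⟩
      refine ⟨max C C', ?_⟩
      rintro U (hU | hU) hUU d hd hanti
      · exact (hC U hU hUU d hd hanti).trans (le_max_left _ _)
      · exact (hC' U hU hUU d hd hanti).trans (le_max_right _ _)
    · intro U₀ hU₀
      obtain ⟨C, hC⟩ := hloc U₀ hU₀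
      exact ⟨_, mem_nhdsWithin_of_mem_nhds hC, C, fun U hU => hU⟩
  obtain ⟨C, hC⟩ := hP
  exact ⟨C, fun U hU => hC U hU hU⟩

/-- Spectral decomposition of a Gram matrix with eigenvalues in decreasing order. -/
lemma exists_spectral (k : Matrix (Fin n) (Fin n) ℝ) (hk : k.det ≠ 0) :
    ∃ (U : Matrix (Fin n) (Fin n) ℝ) (d : Fin n → ℝ), U * Uᵀ = 1 ∧ (∀ j, 0 < d j) ∧ Antitone d ∧
      k * kᵀ = U * diagonal d * Uᵀ := by
  have hpd : (k * kᵀ).PosDef := by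
    have := PosDef.mul_conjTranspose_self k (by
      have hu : IsUnit k := (isUnit_iff_isUnit_det k).mpr (isUnit_iff_ne_zero.mpr hk)
      exact vecMul_injective_of_isUnit hu)
    simpa using this
  have hH : (k * kᵀ).IsHermitian := hpd.1
  set a : Fin n → ℝ := hH.eigenvalues with ha
  set σ : Equiv.Perm (Fin n) := Tuple.sort (fun i => -a i) with hσ
  have hmono : Monotone ((fun i => -a i) ∘ σ) := Tuple.monotone_sort _
  have hchar : (k * kᵀ).charpoly = ∏ i, (Polynomial.X - Polynomial.C ((a (σ i) : ℝ) : ℝ)) := by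
    rw [hH.charpoly_eq]
    exact (Equiv.prod_comp σ fun i => Polynomial.X - Polynomial.C (a i)).symm
  obtain ⟨V, h1, h2, h3⟩ := exists_conj (k * kᵀ) hH (fun i => a (σ i)) hchar
  refine ⟨Vᵀ, fun i => a (σ i), by simpa using h1, fun j => hpd.eigenvalues_pos _,
    fun i j hij => neg_le_neg_iff.mp (hmono hij), by simpa using h3⟩

/-- The energy bound of `exists_bound_diag`, with positive definite matrices written as `k * kᵀ`. -/
lemma exists_bound (α : ι → Fin n → ℝ) (top : ι → ℝ) (g : ι → Fin n → ℝ)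
    (hg : ∀ c m, 0 ≤ g c m) (hα : ∀ c i, α c i = top c - ∑ m, if i < m then g c m else 0)
    (hsum : ∑ c, ∑ i, α c i = 0)
    (Y : ι → Matrix (Fin n) (Fin n) ℝ) (hY : ∀ c, (Y c).det ≠ 0)
    (hss : ∀ (p : Fin n) (t : ι → {j // j < p} → Fin n), 0 < ∑ c, ∑ a, α c (t c a) →
        ∀ w : ({j // j < p} → Fin n) → ℝ,
          (∀ c i, ∑ a, α c (i a) < ∑ a, α c (t c a) →
            (tens {j // j < p} (Y c) *ᵥ w) i = 0) → w = 0) :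
    ∃ C : ℝ, ∀ k : Matrix (Fin n) (Fin n) ℝ, k.det ≠ 0 →
      ∑ c, logVol (top c) (g c) (Y c * k * (Y c * k)ᵀ) ≤ C := by
  obtain ⟨C, hC⟩ := exists_bound_diag α top g hg hα hsum Y hY hss
  refine ⟨C, fun k hk => ?_⟩
  obtain ⟨U, d, hU, hd, hanti, hH⟩ := exists_spectral k hk
  have := hC U hU d hd hanti
  rw [← hH] at this
  simpa only [transpose_mul, Matrix.mul_assoc] using this

/-- The sum of the weighted logarithmic volumes, with a scale invariant penalty of strength `ε`
that forces maximisers to exist. -/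
noncomputable def energy (top : ι → ℝ) (g : ι → Fin n → ℝ) (Y : ι → Matrix (Fin n) (Fin n) ℝ)
    (ε : ℝ) (k : Matrix (Fin n) (Fin n) ℝ) : ℝ :=
  ∑ c, logVol (top c) (g c) (Y c * k * (Y c * k)ᵀ) +
    ε * (Real.log (k * kᵀ).det - n * Real.log (k * kᵀ).trace)

lemma gram_det_pos (k : Matrix (Fin n) (Fin n) ℝ) (hk : k.det ≠ 0) : 0 < (k * kᵀ).det := by
  rw [det_mul, det_transpose, ← sq]
  positivity

lemma gram_trace (k : Matrix (Fin n) (Fin n) ℝ) :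
    (k * kᵀ).trace = ∑ i, ∑ j, k i j ^ 2 := by
  simp [trace, mul_apply, sq]

lemma abs_le_one_of_gram_trace (k : Matrix (Fin n) (Fin n) ℝ) (hk : (k * kᵀ).trace = 1)
    (i j : Fin n) : |k i j| ≤ 1 := by
  rw [gram_trace] at hk
  rw [← sq_le_one_iff_abs_le_one, ← hk]
  exact (Finset.single_le_sum (f := fun j => k i j ^ 2) (fun _ _ => sq_nonneg _)
    (Finset.mem_univ j)).trans (Finset.single_le_sum (f := fun i => ∑ j, k i j ^ 2)
      (fun _ _ => Finset.sum_nonneg fun _ _ => sq_nonneg _) (Finset.mem_univ i))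

lemma gram_trace_pos (hn : 0 < n) (k : Matrix (Fin n) (Fin n) ℝ) (hk : k.det ≠ 0) :
    0 < (k * kᵀ).trace := by
  have h0 : 0 ≤ (k * kᵀ).trace := by
    rw [gram_trace]
    exact Finset.sum_nonneg fun _ _ => Finset.sum_nonneg fun _ _ => sq_nonneg _
  refine lt_of_le_of_ne h0 fun h => hk ?_
  have h1 : k = 0 := (trace_mul_conjTranspose_self_eq_zero_iff (A := k)).mp (by simpa using h.symm)
  have : Nonempty (Fin n) := ⟨⟨0, hn⟩⟩
  rw [h1, det_zero]

/-- Scale invariance uses that the weights have total sum zero. -/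
lemma energy_smul (hn : 0 < n) (α : ι → Fin n → ℝ) (top : ι → ℝ) (g : ι → Fin n → ℝ)
    (hα : ∀ c i, α c i = top c - ∑ m, if i < m then g c m else 0)
    (hsum : ∑ c, ∑ i, α c i = 0)
    (Y : ι → Matrix (Fin n) (Fin n) ℝ) (hY : ∀ c, (Y c).det ≠ 0) (ε : ℝ)
    (k : Matrix (Fin n) (Fin n) ℝ) (hk : k.det ≠ 0) (s : ℝ) (hs : 0 < s) :
    energy top g Y ε (s • k) = energy top g Y ε k := by
  have h1 : ∀ A : Matrix (Fin n) (Fin n) ℝ, (s • A) * (s • A)ᵀ = s ^ 2 • (A * Aᵀ) := by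
    intro A
    rw [transpose_smul, smul_mul_smul_comm, sq]
  have h2 : ∀ c, logVol (top c) (g c) (s ^ 2 • (Y c * k * (Y c * k)ᵀ)) =
      logVol (top c) (g c) (Y c * k * (Y c * k)ᵀ) + Real.log (s ^ 2) * ∑ i, α c i := by
    intro c
    have hYk : (Y c * k).det ≠ 0 := by rw [det_mul]; exact mul_ne_zero (hY c) hk
    simp only [hα]
    exact logVol_smul _ _ _ (gram_det_pos _ hYk) (lead_gram_det_pos _ hYk) _ (by positivity)
  have h3 := gram_det_pos k hk
  have h4 := gram_trace_pos hn k hk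
  simp only [energy, Matrix.mul_smul, h1, h2, Finset.sum_add_distrib, ← Finset.mul_sum, hsum,
    det_smul, trace_smul, smul_eq_mul, Fintype.card_fin]
  rw [Real.log_mul (by positivity) h3.ne', Real.log_mul (by positivity) h4.ne',
    Real.log_pow (s ^ 2)]
  ring

lemma continuousOn_energy (hn : 0 < n) (top : ι → ℝ) (g : ι → Fin n → ℝ)
    (Y : ι → Matrix (Fin n) (Fin n) ℝ) (hY : ∀ c, (Y c).det ≠ 0) (ε : ℝ) :
    ContinuousOn (energy top g Y ε) {k | k.det ≠ 0} := by
  have hc : ∀ A : Matrix (Fin n) (Fin n) ℝ,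
      Continuous fun k : Matrix (Fin n) (Fin n) ℝ => A * k * (A * k)ᵀ := fun A =>
    (continuous_const.matrix_mul continuous_id).matrix_mul
      (continuous_const.matrix_mul continuous_id).matrix_transpose
  have hc1 : Continuous fun k : Matrix (Fin n) (Fin n) ℝ => k * kᵀ :=
    continuous_id.matrix_mul continuous_id.matrix_transpose
  have hYk : ∀ c, ∀ k ∈ {k : Matrix (Fin n) (Fin n) ℝ | k.det ≠ 0}, (Y c * k).det ≠ 0 := by
    intro c k hk
    rw [det_mul]
    exact mul_ne_zero (hY c) hk
  refine (continuousOn_finsetSum _ fun c _ => ?_).add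
    (continuousOn_const.mul (ContinuousOn.sub ?_ (continuousOn_const.mul ?_)))
  · refine ContinuousOn.sub (continuousOn_const.mul ?_)
      (continuousOn_finsetSum _ fun m _ => continuousOn_const.mul ?_)
    · exact (hc (Y c)).matrix_det.continuousOn.log fun k hk => (gram_det_pos _ (hYk c k hk)).ne'
    · exact ((hc (Y c)).matrix_submatrix _ _).matrix_det.continuousOn.log fun k hk =>
        (lead_gram_det_pos _ (hYk c k hk) m).ne'
  · exact hc1.matrix_det.continuousOn.log fun k hk => (gram_det_pos _ hk).ne'
  · exact hc1.matrix_trace.continuousOn.log fun k hk => ne_of_gt (gram_trace_pos hn _ hk)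

/-- For `ε > 0` the penalised energy attains its maximum over invertible matrices, at a point
normalised by `tr (h hᵀ) = 1`. -/
lemma exists_max (hn : 0 < n) (α : ι → Fin n → ℝ) (top : ι → ℝ) (g : ι → Fin n → ℝ)
    (hα : ∀ c i, α c i = top c - ∑ m, if i < m then g c m else 0)
    (hsum : ∑ c, ∑ i, α c i = 0)
    (Y : ι → Matrix (Fin n) (Fin n) ℝ) (hY : ∀ c, (Y c).det ≠ 0)
    (C : ℝ) (hC : ∀ k : Matrix (Fin n) (Fin n) ℝ, k.det ≠ 0 →
      ∑ c, logVol (top c) (g c) (Y c * k * (Y c * k)ᵀ) ≤ C) (ε : ℝ) (hε : 0 < ε) :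
    ∃ h : Matrix (Fin n) (Fin n) ℝ, h.det ≠ 0 ∧ (h * hᵀ).trace = 1 ∧
      ∀ k : Matrix (Fin n) (Fin n) ℝ, k.det ≠ 0 → energy top g Y ε k ≤ energy top g Y ε h := by
  -- Rescaling reduces everything to matrices whose Gram matrix has trace one.
  have hscale : ∀ k : Matrix (Fin n) (Fin n) ℝ, k.det ≠ 0 → ∃ k' : Matrix (Fin n) (Fin n) ℝ,
      k'.det ≠ 0 ∧ (k' * k'ᵀ).trace = 1 ∧ energy top g Y ε k' = energy top g Y ε k := by
    intro k hk
    have ht := gram_trace_pos hn k hk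
    have hs : 0 < (√(k * kᵀ).trace)⁻¹ := inv_pos.mpr (Real.sqrt_pos.mpr ht)
    refine ⟨(√(k * kᵀ).trace)⁻¹ • k, ?_, ?_, energy_smul hn α top g hα hsum Y hY ε k hk _ hs⟩
    · rw [det_smul]
      exact mul_ne_zero (pow_ne_zero _ hs.ne') hk
    · rw [transpose_smul, smul_mul_smul_comm, trace_smul, smul_eq_mul, ← mul_inv,
        Real.mul_self_sqrt ht.le, inv_mul_cancel₀ ht.ne']
  obtain ⟨h₀, hdet₀, htr₀, -⟩ := hscale 1 (by simp)
  set δ : ℝ := min (Real.exp ((energy top g Y ε h₀ - C) / ε)) (h₀ * h₀ᵀ).det with hδ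
  have hδpos : 0 < δ := lt_min (Real.exp_pos _) (gram_det_pos _ hdet₀)
  let S : Set (Matrix (Fin n) (Fin n) ℝ) := {k | (k * kᵀ).trace = 1 ∧ δ ≤ (k * kᵀ).det}
  have hc1 : Continuous fun k : Matrix (Fin n) (Fin n) ℝ => k * kᵀ :=
    continuous_id.matrix_mul continuous_id.matrix_transpose
  have hSdet : ∀ k ∈ S, k.det ≠ 0 := by
    rintro k ⟨-, hk⟩ h0
    rw [det_mul, h0, zero_mul] at hk
    linarith
  have hS : IsCompact S := by
    have hK : IsCompact (Set.pi Set.univ fun _ : Fin n => Set.pi Set.univ fun _ : Fin n =>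
        Set.Icc (-1 : ℝ) 1) :=
      isCompact_univ_pi fun _ => isCompact_univ_pi fun _ => isCompact_Icc
    refine hK.of_isClosed_subset ?_ ?_
    · exact (isClosed_eq hc1.matrix_trace continuous_const).inter
        (isClosed_le continuous_const hc1.matrix_det)
    · intro (k : Matrix (Fin n) (Fin n) ℝ) hk i _ j _
      exact abs_le.mp (abs_le_one_of_gram_trace k hk.1 i j)
  obtain ⟨h, hhS, hmax⟩ := hS.exists_isMaxOn ⟨h₀, htr₀, min_le_right _ _⟩
    ((continuousOn_energy hn top g Y hY ε).mono hSdet)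
  refine ⟨h, hSdet h hhS, hhS.1, fun k hk => ?_⟩
  obtain ⟨k', hk', htr', hk'E⟩ := hscale k hk
  rw [← hk'E]
  by_cases hmem : δ ≤ (k' * k'ᵀ).det
  · exact hmax ⟨htr', hmem⟩
  · -- Below the threshold `δ` the penalty outweighs the bound `C`.
    have hlt : (k' * k'ᵀ).det < Real.exp ((energy top g Y ε h₀ - C) / ε) :=
      (not_le.mp hmem).trans_le (min_le_left _ _)
    have hlog := (Real.log_lt_iff_lt_exp (gram_det_pos _ hk')).mpr hlt
    rw [lt_div_iff₀ hε] at hlog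
    have h1 : energy top g Y ε k' ≤ energy top g Y ε h₀ := by
      have := hC k' hk'
      have h2 : energy top g Y ε k' = ∑ c, logVol (top c) (g c) (Y c * k' * (Y c * k')ᵀ) +
          ε * (Real.log (k' * k'ᵀ).det - n * Real.log (k' * k'ᵀ).trace) := rfl
      rw [h2, htr', Real.log_one, mul_zero, sub_zero]
      linarith
    exact h1.trans (hmax (show h₀ ∈ S from ⟨htr₀, min_le_right _ _⟩))

/-- The derivative of `logVol` in the direction `N`, in the frame of the triangular factor `L`, is
the weighted sum of the diagonal entries of `N`. -/
lemma hasDerivAt_logVol (top : ℝ) (g : Fin n → ℝ) (L N : Matrix (Fin n) (Fin n) ℝ)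
    (hL : ∀ i j, i < j → L i j = 0) (hdet : L.det ≠ 0) :
    HasDerivAt (fun t : ℝ => logVol top g (L * (1 + t • N) * Lᵀ))
      (∑ i, (top - ∑ m, if i < m then g m else 0) * N i i) 0 := by
  have h1 : ∀ t : ℝ, (L * (1 + t • N) * Lᵀ).det = L.det ^ 2 * (1 + t • N).det := by
    intro t
    rw [det_mul, det_mul, det_transpose]
    ring
  have h2 : ∀ (t : ℝ) (m : Fin n), (lead m (L * (1 + t • N) * Lᵀ)).det =
      (lead m L).det ^ 2 * (1 + t • lead m N).det := by
    intro t m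
    have h3 : lead m (1 + t • N) = 1 + t • lead m N := by
      rw [← lead_one m]
      rfl
    rw [lead_conj L _ hL, h3, det_mul, det_mul, det_transpose]
    ring
  simp only [logVol, h1, h2]
  have h4 := ((hasDerivAt_log_det (L.det ^ 2) (pow_ne_zero _ hdet) N).const_mul top).sub
    (HasDerivAt.fun_sum fun m (_ : m ∈ Finset.univ) => (hasDerivAt_log_det ((lead m L).det ^ 2)
      (pow_ne_zero _ (lead_det_ne_zero L hL hdet m)) (lead m N)).const_mul (g m))
  convert! h4 using 1
  have h5 : ∀ m : Fin n, (lead m N).trace = ∑ i, if i < m then N i i else 0 := by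
    intro m
    rw [← Finset.sum_filter]
    exact (Finset.sum_subtype (Finset.univ.filter fun k => k < m) (by simp)
      (fun k => N k k)).symm
  simp only [h5]
  simp only [trace, diag_apply, sub_mul, Finset.sum_sub_distrib, Finset.mul_sum,
    Finset.sum_mul]
  congr 1
  rw [Finset.sum_comm]
  refine Finset.sum_congr rfl fun m _ => Finset.sum_congr rfl fun i _ => ?_
  split_ifs <;> simp

open Topology Filter in
/-- Near the identity a symmetric matrix is a Gram matrix. -/
lemma eventually_exists_sqrt (M : Matrix (Fin n) (Fin n) ℝ) (hM : M.IsSymm) :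
    ∀ᶠ t : ℝ in 𝓝 0, ∃ s : Matrix (Fin n) (Fin n) ℝ, s.det ≠ 0 ∧ 1 + t • M = s * sᵀ := by
  have hH : M.IsHermitian := by
    rw [IsHermitian, conjTranspose_eq_transpose_of_trivial]
    exact hM
  obtain ⟨V, h1, h2, h3⟩ := exists_conj M hH hH.eigenvalues (by rw [hH.charpoly_eq])
  set a := hH.eigenvalues
  rw [conjTranspose_eq_transpose_of_trivial] at h1 h2 h3
  have hev : ∀ᶠ t : ℝ in 𝓝 0, ∀ i, 0 < 1 + t * a i := by
    rw [eventually_all]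
    intro i
    have hc : Continuous fun t : ℝ => 1 + t * a i := by fun_prop
    exact (hc.tendsto 0).eventually (lt_mem_nhds (by simp))
  filter_upwards [hev] with t ht
  refine ⟨Vᵀ * diagonal fun i => √(1 + t * a i), ?_, ?_⟩
  · have hV : V.det ≠ 0 := by
      intro h0
      have := congrArg det h1
      simp [h0] at this
    rw [det_mul, det_transpose, det_diagonal]
    exact mul_ne_zero hV (Finset.prod_ne_zero_iff.mpr fun i _ => (Real.sqrt_pos.mpr (ht i)).ne')
  · have h4 : (diagonal fun i => √(1 + t * a i)) * (diagonal fun i => √(1 + t * a i)) =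
        1 + t • diagonal (fun i => (a i : ℝ)) := by
      rw [diagonal_mul_diagonal, ← diagonal_one, ← diagonal_smul, diagonal_add]
      congr 1
      funext i
      exact Real.mul_self_sqrt (ht i).le
    rw [transpose_mul, diagonal_transpose, transpose_transpose, Matrix.mul_assoc,
      ← Matrix.mul_assoc (diagonal _), h4, Matrix.add_mul, Matrix.mul_add, Matrix.one_mul, h1,
      Matrix.smul_mul, Matrix.mul_smul, ← Matrix.mul_assoc]
    nth_rewrite 1 [h3]
    rfl

/-- The sum of the symmetric matrices with spectra `α c` and eigenbases the rows of `Q c`. -/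
def moment (α : ι → Fin n → ℝ) (Q : ι → Matrix (Fin n) (Fin n) ℝ) : Matrix (Fin n) (Fin n) ℝ :=
  ∑ c, (Q c)ᵀ * diagonal (α c) * Q c

lemma moment_isSymm (α : ι → Fin n → ℝ) (Q : ι → Matrix (Fin n) (Fin n) ℝ) :
    (moment α Q).IsSymm := by
  rw [IsSymm, moment, transpose_sum]
  exact Finset.sum_congr rfl fun c _ => by simp [Matrix.mul_assoc]

lemma trace_moment (α : ι → Fin n → ℝ) (Q : ι → Matrix (Fin n) (Fin n) ℝ)
    (hQ : ∀ c, Q c * (Q c)ᵀ = 1) : (moment α Q).trace = ∑ c, ∑ i, α c i := by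
  rw [moment, trace_sum]
  refine Finset.sum_congr rfl fun c _ => ?_
  rw [Matrix.mul_assoc, trace_mul_comm, Matrix.mul_assoc, hQ, Matrix.mul_one, trace_diagonal]

lemma trace_moment_mul (α : ι → Fin n → ℝ) (Q : ι → Matrix (Fin n) (Fin n) ℝ)
    (M : Matrix (Fin n) (Fin n) ℝ) :
    (moment α Q * M).trace = ∑ c, ∑ i, α c i * (Q c * M * (Q c)ᵀ) i i := by
  rw [moment, Finset.sum_mul, trace_sum]
  refine Finset.sum_congr rfl fun c _ => ?_
  rw [Matrix.mul_assoc, Matrix.mul_assoc, trace_mul_comm, Matrix.mul_assoc]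
  simp [trace, diagonal_mul]

lemma abs_le_one_of_orthogonal (Q : Matrix (Fin n) (Fin n) ℝ) (hQ : Q * Qᵀ = 1) (i j : Fin n) :
    |Q i j| ≤ 1 := by
  have h := congrFun (congrFun hQ i) i
  rw [mul_apply, one_apply_eq] at h
  rw [← sq_le_one_iff_abs_le_one, ← h, sq]
  exact Finset.single_le_sum (f := fun k => Q i k * Qᵀ k i) (fun k _ => mul_self_nonneg (Q i k))
    (Finset.mem_univ j)

lemma abs_moment_le (α : ι → Fin n → ℝ) (Q : ι → Matrix (Fin n) (Fin n) ℝ)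
    (hQ : ∀ c, Q c * (Q c)ᵀ = 1) (j k : Fin n) :
    |moment α Q j k| ≤ ∑ c, ∑ i, |α c i| := by
  rw [moment, Matrix.sum_apply]
  refine (Finset.abs_sum_le_sum_abs _ _).trans (Finset.sum_le_sum fun c _ => ?_)
  rw [mul_apply]
  refine (Finset.abs_sum_le_sum_abs _ _).trans (Finset.sum_le_sum fun i _ => ?_)
  rw [mul_diagonal, transpose_apply, abs_mul, abs_mul]
  have h1 := abs_le_one_of_orthogonal _ (hQ c) i j
  have h2 := abs_le_one_of_orthogonal _ (hQ c) i k
  calc |Q c i j| * |α c i| * |Q c i k| ≤ 1 * |α c i| * 1 := by gcongr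
    _ = |α c i| := by ring

open Topology Filter in
/-- The first-order condition at a maximiser `h` of the penalised energy, tested against the
variation `h (1 + t M) hᵀ` of `h hᵀ`, where `M` is the moment matrix of the orthogonal factors of
the `Y c * h`. -/
lemma exists_moment_eq (α : ι → Fin n → ℝ) (top : ι → ℝ) (g : ι → Fin n → ℝ)
    (hα : ∀ c i, α c i = top c - ∑ m, if i < m then g c m else 0)
    (hsum : ∑ c, ∑ i, α c i = 0)
    (Y : ι → Matrix (Fin n) (Fin n) ℝ) (hY : ∀ c, (Y c).det ≠ 0) (ε : ℝ)
    (h : Matrix (Fin n) (Fin n) ℝ) (hdet : h.det ≠ 0) (htr : (h * hᵀ).trace = 1)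
    (hmax : ∀ k : Matrix (Fin n) (Fin n) ℝ, k.det ≠ 0 →
      energy top g Y ε k ≤ energy top g Y ε h) :
    ∃ Q : ι → Matrix (Fin n) (Fin n) ℝ, (∀ c, Q c * (Q c)ᵀ = 1) ∧
      (moment α Q * moment α Q).trace = ε * (n * (h * moment α Q * hᵀ).trace) := by
  choose L Q hLQ hQ hL using fun c => exists_LQ (Y c * h)
  refine ⟨Q, hQ, ?_⟩
  set M := moment α Q with hM
  have hLdet : ∀ c, (L c).det ≠ 0 := by
    intro c h0
    have h1 := congrArg det (hLQ c)
    rw [det_mul, det_mul, h0, zero_mul] at h1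
    exact mul_ne_zero (hY c) hdet h1
  let f : ℝ → ℝ := fun t =>
    ∑ c, logVol (top c) (g c) (L c * (1 + t • (Q c * M * (Q c)ᵀ)) * (L c)ᵀ) +
      ε * (Real.log ((h * hᵀ).det * (1 + t • M).det) -
        n * Real.log (1 + t * (h * M * hᵀ).trace))
  -- `f t` is the energy of any `h * s` with `s * sᵀ = 1 + t M`.
  have hf : ∀ (t : ℝ) (s : Matrix (Fin n) (Fin n) ℝ), 1 + t • M = s * sᵀ →
      energy top g Y ε (h * s) = f t := by
    intro t s hs
    have h1 : ∀ A : Matrix (Fin n) (Fin n) ℝ, A * s * (A * s)ᵀ = A * (1 + t • M) * Aᵀ := by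
      intro A
      rw [hs, transpose_mul]
      simp only [Matrix.mul_assoc]
    have h2 : ∀ c, Y c * (h * s) * (Y c * (h * s))ᵀ =
        L c * (1 + t • (Q c * M * (Q c)ᵀ)) * (L c)ᵀ := by
      intro c
      rw [← Matrix.mul_assoc, h1, hLQ c, transpose_mul]
      have h3 : Q c * (1 + t • M) * (Q c)ᵀ = 1 + t • (Q c * M * (Q c)ᵀ) := by
        rw [Matrix.mul_add, Matrix.add_mul, Matrix.mul_one, hQ, Matrix.mul_smul, Matrix.smul_mul]
      rw [← h3]
      simp only [Matrix.mul_assoc]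
    have h4 : (h * s * (h * s)ᵀ).det = (h * hᵀ).det * (1 + t • M).det := by
      rw [h1, det_mul, det_mul, det_mul]
      ring
    have h5 : (h * s * (h * s)ᵀ).trace = 1 + t * (h * M * hᵀ).trace := by
      rw [h1, Matrix.mul_add, Matrix.add_mul, Matrix.mul_one, trace_add, htr, Matrix.mul_smul,
        Matrix.smul_mul, trace_smul, smul_eq_mul]
    simp only [energy, f, h2, h4, h5]
  have hf0 : energy top g Y ε h = f 0 := by
    have := hf 0 1 (by simp)
    rwa [Matrix.mul_one] at this
  have hloc : IsLocalMax f 0 := by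
    filter_upwards [eventually_exists_sqrt M (moment_isSymm α Q)] with t ⟨s, hs, hts⟩
    rw [← hf0, ← hf t s hts]
    exact hmax _ (by rw [det_mul]; exact mul_ne_zero hdet hs)
  have hder : HasDerivAt f (∑ c, ∑ i, α c i * (Q c * M * (Q c)ᵀ) i i +
      ε * (M.trace - n * (h * M * hᵀ).trace)) 0 := by
    have h1 := HasDerivAt.fun_sum fun c (_ : c ∈ Finset.univ) =>
      hasDerivAt_logVol (top c) (g c) (L c) (Q c * M * (Q c)ᵀ) (hL c) (hLdet c)
    have h2 := hasDerivAt_log_det (h * hᵀ).det (gram_det_pos h hdet).ne' M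
    have h3 : HasDerivAt (fun t : ℝ => Real.log (1 + t * (h * M * hᵀ).trace))
        (h * M * hᵀ).trace 0 := by
      have h4 := (((hasDerivAt_id (0 : ℝ)).mul_const (h * M * hᵀ).trace).const_add 1).log
        (by simp)
      convert! h4 using 1
      simp
    simp only [hα]
    exact h1.add ((h2.sub (h3.const_mul (n : ℝ))).const_mul ε)
  have hzero := hloc.hasDerivAt_eq_zero hder
  rw [← trace_moment_mul, ← hM, hM, trace_moment α Q hQ, hsum] at hzero
  linarith

/-- Real orthogonal matrices whose moment matrix vanishes, as a limit of maximisers of the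
penalised energy. -/
lemma exists_moment_eq_zero (hn : 0 < n) (α : ι → Fin n → ℝ) (hα : ∀ c, Monotone (α c))
    (hsum : ∑ c, ∑ i, α c i = 0)
    (Y : ι → Matrix (Fin n) (Fin n) ℝ) (hY : ∀ c, (Y c).det ≠ 0)
    (hss : ∀ (p : Fin n) (t : ι → {j // j < p} → Fin n), 0 < ∑ c, ∑ a, α c (t c a) →
        ∀ w : ({j // j < p} → Fin n) → ℝ,
          (∀ c i, ∑ a, α c (i a) < ∑ a, α c (t c a) →
            (tens {j // j < p} (Y c) *ᵥ w) i = 0) → w = 0) :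
    ∃ Q : ι → Matrix (Fin n) (Fin n) ℝ, (∀ c, Q c * (Q c)ᵀ = 1) ∧ moment α Q = 0 := by
  choose top g hg hlay using fun c => exists_layers (α c) (hα c)
  obtain ⟨C, hC⟩ := exists_bound α top g hg hlay hsum Y hY hss
  set B : ℝ := n * ∑ _i : Fin n, ∑ _k : Fin n, ∑ _j : Fin n, ∑ c, ∑ i, |α c i| with hB
  have happrox : ∀ ε : ℝ, 0 < ε → ∃ Q : ι → Matrix (Fin n) (Fin n) ℝ,
      (∀ c, Q c * (Q c)ᵀ = 1) ∧ (moment α Q * moment α Q).trace ≤ ε * B := by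
    intro ε hε
    obtain ⟨h, hdet, htr, hmax⟩ := exists_max hn α top g hlay hsum Y hY C hC ε hε
    obtain ⟨Q, hQ, heq⟩ := exists_moment_eq α top g hlay hsum Y hY ε h hdet htr hmax
    refine ⟨Q, hQ, ?_⟩
    rw [heq, hB]
    gcongr
    simp only [trace, diag_apply, mul_apply, transpose_apply, Finset.sum_mul]
    refine Finset.sum_le_sum fun i _ => Finset.sum_le_sum fun k _ => Finset.sum_le_sum fun j _ => ?_
    refine (le_abs_self _).trans ?_
    rw [abs_mul, abs_mul]
    have h1 := abs_le_one_of_gram_trace h htr i j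
    have h2 := abs_le_one_of_gram_trace h htr i k
    have h3 := abs_moment_le α Q hQ j k
    calc |h i j| * |moment α Q j k| * |h i k| ≤ 1 * (∑ c, ∑ i, |α c i|) * 1 := by gcongr
      _ = _ := by ring
  have hB0 : 0 ≤ B := by positivity
  have hcpt : IsCompact (Set.pi Set.univ fun _ : ι =>
      {U : Matrix (Fin n) (Fin n) ℝ | U * Uᵀ = 1}) :=
    isCompact_univ_pi fun _ => isCompact_orthogonal
  have hcont : Continuous fun Q : ι → Matrix (Fin n) (Fin n) ℝ => moment α Q :=
    continuous_finsetSum _ fun c _ =>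
      ((continuous_apply c).matrix_transpose.matrix_mul continuous_const).matrix_mul
        (continuous_apply c)
  obtain ⟨Q, hQ, hmin⟩ := hcpt.exists_isMinOn ⟨fun _ => 1, fun c _ => by simp⟩
    ((hcont.matrix_mul hcont).matrix_trace.continuousOn)
  refine ⟨Q, fun c => hQ c trivial, ?_⟩
  have hsymm : (moment α Q)ᵀ = moment α Q := moment_isSymm α Q
  have hle : (moment α Q * moment α Q).trace ≤ 0 := by
    refine le_of_forall_pos_le_add fun η hη => ?_
    obtain ⟨Q', hQ', hle⟩ := happrox (η / (B + 1)) (by positivity)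
    have h1 : (moment α Q * moment α Q).trace ≤ (moment α Q' * moment α Q').trace :=
      hmin (show Q' ∈ _ from fun c _ => hQ' c)
    have h2 : η / (B + 1) * B ≤ η := by
      rw [div_mul_eq_mul_div, div_le_iff₀ (by positivity)]
      nlinarith
    linarith
  have hge : 0 ≤ (moment α Q * (moment α Q)ᵀ).trace := by
    rw [gram_trace]
    positivity
  rw [hsymm] at hge
  refine (trace_mul_conjTranspose_self_eq_zero_iff (A := moment α Q)).mp ?_
  rw [conjTranspose_eq_transpose_of_trivial, hsymm]
  exact le_antisymm hle hge

end Maximum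

/-! ### Complex and real solutions -/

section Main

variable {n : ℕ}

/-- The passage from unitary to orthogonal solutions, for any number of summands. -/
lemma exists_orthogonal {ι : Type*} [Fintype ι] [DecidableEq ι] (hn : 0 < n) (α : ι → Fin n → ℝ)
    (hα : ∀ c, Monotone (α c)) (X : ι → Matrix (Fin n) (Fin n) ℂ) (hX : ∀ c, (X c)ᴴ * X c = 1)
    (hsum : ∑ c, (X c)ᴴ * diagonal (fun i => (α c i : ℂ)) * X c = 0) :
    ∃ Q : ι → Matrix (Fin n) (Fin n) ℝ, (∀ c, Q c * (Q c)ᵀ = 1) ∧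
      ∑ c, (Q c)ᵀ * diagonal (α c) * Q c = 0 := by
  have htr : ∑ c, ∑ i, α c i = 0 := by
    have h1 := congrArg trace hsum
    rw [trace_sum, trace_zero] at h1
    have h2 : ∀ c, ((X c)ᴴ * diagonal (fun i => (α c i : ℂ)) * X c).trace =
        ((∑ i, α c i : ℝ) : ℂ) := by
      intro c
      rw [Matrix.mul_assoc, trace_mul_comm, Matrix.mul_assoc, mul_eq_one_comm.mp (hX c),
        Matrix.mul_one, trace_diagonal]
      push_cast
      rfl
    simp only [h2] at h1
    exact_mod_cast h1
  obtain ⟨Y, hY, hss⟩ := exists_real_semistable α X hX hsum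
  exact exists_moment_eq_zero hn α hα htr Y hY hss

lemma charpoly_conj (Q : Matrix (Fin n) (Fin n) ℝ) (hQ : Q * Qᵀ = 1) (a : Fin n → ℝ) :
    (Qᵀ * diagonal a * Q).charpoly = ∏ i, (Polynomial.X - Polynomial.C (a i)) := by
  rw [Matrix.mul_assoc, charpoly_mul_comm, Matrix.mul_assoc, hQ, Matrix.mul_one, charpoly_diagonal]

lemma isSymm_conj (Q : Matrix (Fin n) (Fin n) ℝ) (a : Fin n → ℝ) :
    (Qᵀ * diagonal a * Q).IsSymm := by
  simp [IsSymm, Matrix.mul_assoc]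

end Main

/-- For weakly decreasing `λ, μ, ν ∈ ℝⁿ`, there exist complex Hermitian
matrices `A, B` with `spec A = λ`, `spec B = μ`, `spec (A+B) = ν` if and only if there exist
real symmetric matrices with the same property.  (Here `spec A = λ` is expressed by the
characteristic polynomial being `∏ (X − λᵢ)`, i.e. the eigenvalues with multiplicity are
exactly the `λᵢ`.) -/
theorem stmt9 (n : ℕ) (hn : 1 ≤ n) (lam mu nu : Fin n → ℝ)
    (hlam : Antitone lam) (hmu : Antitone mu) (hnu : Antitone nu) :
    (∃ A B : Matrix (Fin n) (Fin n) ℂ, A.IsHermitian ∧ B.IsHermitian ∧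
      A.charpoly = ∏ i : Fin n, (Polynomial.X - Polynomial.C (lam i : ℂ)) ∧
      B.charpoly = ∏ i : Fin n, (Polynomial.X - Polynomial.C (mu i : ℂ)) ∧
      (A + B).charpoly = ∏ i : Fin n, (Polynomial.X - Polynomial.C (nu i : ℂ))) ↔
    (∃ A B : Matrix (Fin n) (Fin n) ℝ, A.IsSymm ∧ B.IsSymm ∧
      A.charpoly = ∏ i : Fin n, (Polynomial.X - Polynomial.C (lam i)) ∧
      B.charpoly = ∏ i : Fin n, (Polynomial.X - Polynomial.C (mu i)) ∧
      (A + B).charpoly = ∏ i : Fin n, (Polynomial.X - Polynomial.C (nu i))) := by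
  constructor
  · rintro ⟨A, B, hA, hB, hlA, hmB, hnAB⟩
    have hrev : ∀ {R : Type} [CommRing R] (f : Fin n → R), ∏ i, f (Fin.rev i) = ∏ i, f i :=
      fun f => Equiv.prod_comp Fin.revPerm f
    obtain ⟨V₁, hV₁, -, rfl⟩ := exists_conj A hA (fun i => lam (Fin.rev i)) (by
      rw [hlA, ← hrev]
      rfl)
    obtain ⟨V₂, hV₂, -, rfl⟩ := exists_conj B hB (fun i => mu (Fin.rev i)) (by
      rw [hmB, ← hrev]
      rfl)
    obtain ⟨V₃, hV₃, -, heq⟩ := exists_conj _ (hA.add hB) nu hnAB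
    -- Increasing weights, with the spectrum of the sum moved to the left-hand side.
    obtain ⟨Q, hQ, hsum⟩ := exists_orthogonal (ι := Fin 3) hn
      ![fun i => lam (Fin.rev i), fun i => mu (Fin.rev i), fun i => -nu i]
      (fun c => by
        fin_cases c
        · exact fun i j hij => hlam (Fin.rev_le_rev.mpr hij)
        · exact fun i j hij => hmu (Fin.rev_le_rev.mpr hij)
        · exact fun i j hij => neg_le_neg (hnu hij))
      ![V₁, V₂, V₃] (fun c => by fin_cases c <;> assumption)
      (by
        have hneg : (diagonal fun i => ((-nu i : ℝ) : ℂ)) = -diagonal fun i => (nu i : ℂ) := by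
          rw [diagonal_neg]
          congr 1
          funext i
          simp
        rw [Fin.sum_univ_three]
        simp only [cons_val_zero, cons_val_one, cons_val]
        rw [hneg, Matrix.mul_neg, Matrix.neg_mul, ← sub_eq_add_neg, sub_eq_zero]
        exact heq)
    rw [Fin.sum_univ_three] at hsum
    simp only [cons_val_zero, cons_val_one, cons_val] at hsum
    rw [← diagonal_neg, Matrix.mul_neg, Matrix.neg_mul, ← sub_eq_add_neg, sub_eq_zero] at hsum
    refine ⟨_, _, isSymm_conj (Q 0) fun i => lam (Fin.rev i),
      isSymm_conj (Q 1) fun i => mu (Fin.rev i), ?_, ?_, ?_⟩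
    · rw [charpoly_conj _ (hQ 0)]
      exact hrev fun i => Polynomial.X - Polynomial.C (lam i)
    · rw [charpoly_conj _ (hQ 1)]
      exact hrev fun i => Polynomial.X - Polynomial.C (mu i)
    · rw [hsum, charpoly_conj _ (hQ 2)]
  · rintro ⟨A, B, hA, hB, hlA, hmB, hnAB⟩
    have hherm : ∀ S : Matrix (Fin n) (Fin n) ℝ, S.IsSymm →
        (S.map Complex.ofRealHom).IsHermitian := by
      intro S hS
      ext i j
      simp [hS.apply i j]
    have hchar : ∀ (S : Matrix (Fin n) (Fin n) ℝ) (a : Fin n → ℝ),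
        S.charpoly = ∏ i, (Polynomial.X - Polynomial.C (a i)) →
        (S.map Complex.ofRealHom).charpoly =
          ∏ i, (Polynomial.X - Polynomial.C (a i : ℂ)) := by
      intro S a hS
      rw [charpoly_map, hS, Polynomial.map_prod]
      simp
    refine ⟨A.map Complex.ofRealHom, B.map Complex.ofRealHom, hherm A hA, hherm B hB,
      hchar A lam hlA, hchar B mu hmB, ?_⟩
    rw [← Matrix.map_add _ (map_add Complex.ofRealHom)]
    exact hchar _ nu hnAB
end
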